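/- Let A ⊂ S⁴ be a compact connected simply connected smooth 4-dimensional submanifold with boundary, and let M be a connected component of ∂A. Then S⁴ \ M has exactly two connected components; and if A' is the closure of the component containing the interior of A, then A' is simply connected. -/

import Mathlib

/-- The 4-sphere, as the unit sphere in `ℝ⁵`. -/
abbrev Sph4 : Type := Metric.sphere (0 : EuclideanSpace ℝ (Fin 5)) 1

/-! By invariance of domain, boundary charts of `A` describe `A` near `∂A`, so `M` is relatively
open in `∂A` and some function `h` is `0` on `M` and `1` on `∂A \ M`. Modulo `ℤ` and extended by `0`
off `A`, it lifts to a function `F` on the simply connected sphere which is integral off `A`.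
Cutting at `F = 1 / 2` splits the complement of `M` into an inner side `U ⊇ interior A` and an outer
side `V`, both with frontier `M`.

* `U` is connected because half balls inside `A` join it along the connected set `M`.
* `V` is connected in the same way, by Borsuk's criterion: pushing `∂A` into `A` off a point `x₀` of
  `M` moves `M` away from `x₀` without meeting `V`, so `M` does not separate points of `V` close to
  `x₀`.
* `closure U` is simply connected: a null-homotopy in the sphere of a loop in `closure U` is
  subdivided into cells lying in the open set `U`, or in an open set which meets `closure U` only
  inside the simply connected set `A`.
-/

namespace SphereBoundary

open Set Filter Topology Metric MeasureTheory
open scoped unitInterval Manifold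

section Brouwer

open Polynomial

theorem integral_eval_eq_of_infinite {Ω : Type*} [MeasurableSpace Ω] {μ : Measure Ω}
    {P : Ω → ℝ[X]} {N : ℕ} (hdeg : ∀ ω, (P ω).natDegree ≤ N) {T : Set ℝ} (hT : T.Infinite)
    (hint : ∀ t ∈ T, Integrable (fun ω => (P ω).eval t) μ) {C : ℝ}
    (hC : ∀ t ∈ T, ∫ ω, (P ω).eval t ∂μ = C) (a : ℝ) : ∫ ω, (P ω).eval a ∂μ = C := by
  obtain ⟨s, hsT, hcard⟩ := hT.exists_subset_card_eq (N + 1)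
  have hinterp : ∀ p : ℝ[X], p.natDegree ≤ N →
      p.eval a = ∑ t ∈ s, (Lagrange.basis s id t).eval a * p.eval t := by
    intro p hp
    have hlt : p.degree < s.card :=
      (degree_le_of_natDegree_le hp).trans_lt (by rw [hcard]; exact_mod_cast Nat.lt_succ_self N)
    conv_lhs => rw [Lagrange.eq_interpolate (v := id) Function.injective_id.injOn hlt]
    simp only [Lagrange.interpolate_apply, eval_finsetSum, eval_mul, eval_C, id_eq, mul_comm]
  have hsum : ∑ t ∈ s, (Lagrange.basis s id t).eval a = 1 := by
    simpa using (hinterp 1 (by simp)).symm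
  calc ∫ ω, (P ω).eval a ∂μ
      = ∫ ω, ∑ t ∈ s, (Lagrange.basis s id t).eval a * (P ω).eval t ∂μ := by
        simp_rw [hinterp _ (hdeg _)]
    _ = ∑ t ∈ s, (Lagrange.basis s id t).eval a * ∫ ω, (P ω).eval t ∂μ := by
        rw [integral_finsetSum _ fun t ht => (hint t (hsT ht)).const_mul _]
        simp_rw [integral_const_mul]
    _ = C := by
        rw [Finset.sum_congr rfl fun t ht => by rw [hC t (hsT ht)], ← Finset.sum_mul, hsum, one_mul]

theorem exists_pos_forall_mul_pow_le_setIntegral_pow {X : Type*} [TopologicalSpace X] [T2Space X]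
    [MeasurableSpace X] [OpensMeasurableSpace X] {μ : Measure X} [IsFiniteMeasureOnCompacts μ]
    [μ.IsOpenPosMeasure] {K : Set X} (hK : IsCompact K) {x₀ : X} (hx₀ : x₀ ∈ interior K)
    {q : X → ℝ} (hq : ContinuousOn q K) (hq0 : ∀ x ∈ K, 0 ≤ q x) {b : ℝ} (hb : 0 ≤ b)
    (hbq : b < q x₀) : ∃ c, 0 < c ∧ ∀ m : ℕ, c * b ^ m ≤ ∫ x in K, q x ^ m ∂μ := by
  obtain ⟨U, hUsub, hUo, hxU⟩ : ∃ U ⊆ {x ∈ K | b < q x}, IsOpen U ∧ x₀ ∈ U := by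
    have hnhd : K ∈ 𝓝 x₀ := mem_interior_iff_mem_nhds.1 hx₀
    exact mem_nhds_iff.1
      (Filter.inter_mem hnhd ((hq.continuousAt hnhd).eventually (lt_mem_nhds hbq)))
  have hUK : U ⊆ K := fun x hx => (hUsub hx).1
  have hUfin : μ U < ⊤ := (measure_mono hUK).trans_lt hK.measure_lt_top
  have hint (m : ℕ) : IntegrableOn (fun x => q x ^ m) K μ := (hq.pow m).integrableOn_compact hK
  refine ⟨μ.real U, ENNReal.toReal_pos (hUo.measure_pos μ ⟨x₀, hxU⟩).ne' hUfin.ne, fun m => ?_⟩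
  calc
    μ.real U * b ^ m = ∫ _ in U, b ^ m ∂μ := by rw [setIntegral_const, smul_eq_mul]
    _ ≤ ∫ x in U, q x ^ m ∂μ :=
      setIntegral_mono_on (integrableOn_const hUfin.ne) ((hint m).mono_set hUK)
        hUo.measurableSet fun x hx => pow_le_pow_left₀ hb (hUsub hx).2.le m
    _ ≤ ∫ x in K, q x ^ m ∂μ :=
      setIntegral_mono_set (hint m)
        ((ae_restrict_iff' hK.measurableSet).2 (.of_forall fun x hx => pow_nonneg (hq0 x hx) m))
        hUK.eventuallyLE

theorem exists_le_abs_of_forall_integral_mul_pow_eq {X : Type*} [TopologicalSpace X] [T2Space X]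
    [MeasurableSpace X] [OpensMeasurableSpace X] {μ : Measure X} [IsFiniteMeasureOnCompacts μ]
    [μ.IsOpenPosMeasure] {K : Set X} (hK : IsCompact K) {x₀ : X} (hx₀ : x₀ ∈ interior K)
    {w p q : X → ℝ} (hw : ContinuousOn w K) (hp : ContinuousOn p K) (hq : ContinuousOn q K)
    (hq0 : ∀ x ∈ K, 0 ≤ q x)
    (h : ∀ m : ℕ, ∫ x in K, w x * p x ^ m ∂μ = ∫ x in K, q x ^ m ∂μ) :
    ∃ x ∈ K, q x₀ ≤ |p x| := by
  by_contra! hlt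
  have hKne : K.Nonempty := ⟨x₀, interior_subset hx₀⟩
  obtain ⟨x₁, hx₁, hmax⟩ := hK.exists_isMaxOn hKne hp.abs
  obtain ⟨x₂, -, hwmax⟩ := hK.exists_isMaxOn hKne hw.abs
  obtain ⟨b, hab, hbq⟩ := exists_between (hlt x₁ hx₁)
  have hb : 0 < b := (abs_nonneg _).trans_lt hab
  obtain ⟨c, hc, lower⟩ :=
    exists_pos_forall_mul_pow_le_setIntegral_pow (μ := μ) hK hx₀ hq hq0 hb.le hbq
  have upper (m : ℕ) : ∫ x in K, w x * p x ^ m ∂μ ≤ |w x₂| * |p x₁| ^ m * μ.real K := by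
    refine (Real.le_norm_self _).trans
      (norm_setIntegral_le_of_norm_le_const hK.measure_lt_top fun x hx => ?_)
    rw [norm_mul, norm_pow, Real.norm_eq_abs, Real.norm_eq_abs]
    exact mul_le_mul (hwmax hx) (pow_le_pow_left₀ (abs_nonneg _) (hmax hx) m) (by positivity)
      (abs_nonneg _)
  have hlim : Tendsto (fun m : ℕ => |w x₂| * μ.real K * (|p x₁| / b) ^ m) atTop (𝓝 0) := by
    simpa using (tendsto_pow_atTop_nhds_zero_of_lt_one (by positivity)
      ((div_lt_one hb).2 hab)).const_mul (|w x₂| * μ.real K)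
  obtain ⟨m, hm⟩ := (hlim.eventually (gt_mem_nhds hc)).exists
  rw [div_pow, ← mul_div_assoc, div_lt_iff₀ (by positivity)] at hm
  linarith [lower m, upper m, h m]

theorem bijective_add_of_lipschitzWith {E : Type*} [NormedAddCommGroup E] [CompleteSpace E]
    {K : NNReal} (hK : K < 1) {k : E → E} (hk : LipschitzWith K k) :
    Function.Bijective fun x => x + k x := by
  refine ⟨(AntilipschitzWith.id.add_lipschitzWith hk (by simpa using hK)).injective, fun y => ?_⟩
  have hc : ContractingWith K fun x => y - k x :=
    ⟨hK, by simpa using (LipschitzWith.const y).sub hk⟩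
  exact ⟨hc.fixedPoint _, eq_sub_iff_add_eq.1 hc.fixedPoint_isFixedPt.symm⟩

theorem image_eq_of_bijective_of_eqOn_compl {α : Type*} {f : α → α} (hf : Function.Bijective f)
    {s : Set α} (hs : EqOn f id sᶜ) : f '' s = s := by
  rw [← compl_inj_iff, ← image_compl_eq hf, hs.image_eq, image_id]

theorem exists_polynomial_eval_eq_det_id_add_smul {E : Type*} [NormedAddCommGroup E]
    [NormedSpace ℝ E] [FiniteDimensional ℝ E] (L : E →L[ℝ] E) :
    ∃ p : ℝ[X], p.natDegree ≤ Module.finrank ℝ E ∧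
      ∀ t, p.eval t = (ContinuousLinearMap.id ℝ E + t • L).det := by
  let b := Module.finBasis ℝ E
  let A := LinearMap.toMatrix b b (L : E →ₗ[ℝ] E)
  refine ⟨((X : ℝ[X]) • A.map C + (1 : Matrix _ _ ℝ).map C).det, ?_, fun t => ?_⟩
  · simpa using natDegree_det_X_add_C_le A 1
  · have hdet : (ContinuousLinearMap.id ℝ E + t • L).det = (1 + t • A).det := by
      rw [ContinuousLinearMap.det, ← LinearMap.det_toMatrix b]
      simp [A]
    rw [hdet, ← coe_evalRingHom, RingHom.map_det]
    congr 1
    ext i j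
    by_cases hij : i = j <;> simp [A, hij] <;> ring

variable {E : Type*} [NormedAddCommGroup E] [InnerProductSpace ℝ E]

theorem exists_polynomial_eval_eq_sub_norm_sq_pow (x h y : E) (c : ℝ) (m : ℕ) :
    ∃ p : ℝ[X], p.natDegree ≤ 2 * m ∧ ∀ t : ℝ, p.eval t = (c - ‖x + t • h - y‖ ^ 2) ^ m := by
  have hdeg : (C (c - ‖x - y‖ ^ 2) + C (-(2 * inner ℝ (x - y) h)) * X +
      C (-‖h‖ ^ 2) * X ^ 2).natDegree ≤ 2 := by compute_degree
  refine ⟨_, (natDegree_pow_le_of_le m hdeg).trans_eq (mul_comm m 2), fun t => ?_⟩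
  have hsplit : x + t • h - y = (x - y) + t • h := by abel
  simp only [eval_pow, eval_add, eval_mul, eval_C, eval_X, hsplit, norm_add_sq_real,
    inner_smul_right, norm_smul, mul_pow, Real.norm_eq_abs, sq_abs]
  ring

variable [FiniteDimensional ℝ E]

theorem eventually_setIntegral_det_mul_comp_eq [MeasurableSpace E] [BorelSpace E] {h : E → E}
    (hh : ContDiff ℝ 1 h) {K : Set E} (hK : IsCompact K) (h0 : ∀ x ∉ K, h x = 0) :
    ∀ᶠ t : ℝ in 𝓝 0, ∀ φ : E → ℝ,
      ∫ x in K, (ContinuousLinearMap.id ℝ E + t • fderiv ℝ h x).det * φ (x + t • h x) =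
        ∫ x in K, φ x := by
  obtain ⟨C, hC⟩ := hh.lipschitzWith_of_hasCompactSupport
    (.intro hK h0) one_ne_zero
  have hlip : ∀ᶠ t : ℝ in 𝓝 0, ‖t‖₊ * C < 1 :=
    (by fun_prop : Continuous fun t : ℝ => ‖t‖₊ * C).continuousAt.eventually
      (gt_mem_nhds (by simp))
  have hdet : ∀ᶠ t : ℝ in 𝓝 0, ∀ x ∈ K,
      0 < (ContinuousLinearMap.id ℝ E + t • fderiv ℝ h x).det := by
    have hc : Continuous fun z : ℝ × E =>
        (ContinuousLinearMap.id ℝ E + z.1 • fderiv ℝ h z.2).det :=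
      ContinuousLinearMap.continuous_det.comp (continuous_const.add
        (continuous_fst.smul ((hh.continuous_fderiv one_ne_zero).comp continuous_snd)))
    refine hK.eventually_forall_of_forall_eventually fun x _ => hc.continuousAt.eventually
      (lt_mem_nhds ?_)
    simp [ContinuousLinearMap.det]
  filter_upwards [hlip, hdet] with t htC htdet φ
  have hbij : Function.Bijective fun x => x + t • h x :=
    bijective_add_of_lipschitzWith htC ((lipschitzWith_smul t).comp hC)
  have himg : (fun x => x + t • h x) '' K = K :=
    image_eq_of_bijective_of_eqOn_compl hbij fun x hx => by simp [h0 x hx]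
  have hder : ∀ x ∈ K, HasFDerivWithinAt (fun x => x + t • h x)
      (ContinuousLinearMap.id ℝ E + t • fderiv ℝ h x) K x := fun x _ =>
    ((hasFDerivAt_id x).add
      ((hh.differentiable one_ne_zero x).hasFDerivAt.const_smul t)).hasFDerivWithinAt
  have hcv := integral_image_eq_integral_abs_det_fderiv_smul volume hK.measurableSet hder
    hbij.injective.injOn φ
  rw [himg] at hcv
  rw [hcv]
  refine setIntegral_congr_fun hK.measurableSet fun x hx => ?_
  simp only [abs_of_pos (htdet x hx), smul_eq_mul]

-- With `t • h` in place of `h`, the left side is a polynomial in `t` which is constant near `0`.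
theorem setIntegral_det_mul_sub_norm_sq_pow_eq [MeasurableSpace E] [BorelSpace E] {h : E → E}
    (hh : ContDiff ℝ 1 h) {K : Set E} (hK : IsCompact K) (h0 : ∀ x ∉ K, h x = 0) (y : E) (c : ℝ)
    (m : ℕ) :
    ∫ x in K, (ContinuousLinearMap.id ℝ E + fderiv ℝ h x).det * (c - ‖x + h x - y‖ ^ 2) ^ m =
      ∫ x in K, (c - ‖x - y‖ ^ 2) ^ m := by
  choose p hpdeg hp using fun x => exists_polynomial_eval_eq_det_id_add_smul (fderiv ℝ h x)
  choose q hqdeg hq using fun x => exists_polynomial_eval_eq_sub_norm_sq_pow x (h x) y c m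
  have hdeg : ∀ x, (p x * q x).natDegree ≤ Module.finrank ℝ E + 2 * m := fun x =>
    natDegree_mul_le.trans (add_le_add (hpdeg x) (hqdeg x))
  have hint : ∀ t : ℝ, IntegrableOn (fun x => (p x * q x).eval t) K := by
    intro t
    simp only [eval_mul, hp, hq]
    have hdet : Continuous fun x => (ContinuousLinearMap.id ℝ E + t • fderiv ℝ h x).det :=
      ContinuousLinearMap.continuous_det.comp
        (continuous_const.add ((hh.continuous_fderiv one_ne_zero).const_smul t))
    have := hh.continuous
    exact (by fun_prop : Continuous _).continuousOn.integrableOn_compact hK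
  have hsmall := eventually_setIntegral_det_mul_comp_eq hh hK h0
  have key := integral_eval_eq_of_infinite hdeg (infinite_of_mem_nhds 0 hsmall)
    (fun t _ => hint t) (C := ∫ x in K, (c - ‖x - y‖ ^ 2) ^ m) (fun t ht => by
      simpa only [eval_mul, hp, hq] using ht fun z => (c - ‖z - y‖ ^ 2) ^ m) 1
  simpa only [eval_mul, hp, hq, one_smul] using key

theorem surjective_add_of_contDiff_of_hasCompactSupport {h : E → E} (hh : ContDiff ℝ 1 h)
    (hcs : HasCompactSupport h) : Function.Surjective fun x => x + h x := by
  intro y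
  borelize E
  obtain ⟨R, hR⟩ := (hcs.isCompact.insert y).isBounded.subset_ball 0
  have hK := isCompact_closedBall (0 : E) R
  have h0 : ∀ x ∉ closedBall (0 : E) R, h x = 0 := fun x hx =>
    image_eq_zero_of_notMem_tsupport fun hx' =>
      hx (ball_subset_closedBall (hR (mem_insert_of_mem _ hx')))
  have hhc := hh.continuous
  have hy : y ∈ interior (closedBall (0 : E) R) :=
    ball_subset_interior_closedBall (hR (mem_insert _ _))
  have hdet : Continuous fun x => (ContinuousLinearMap.id ℝ E + fderiv ℝ h x).det :=
    ContinuousLinearMap.continuous_det.comp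
      (continuous_const.add (hh.continuous_fderiv one_ne_zero))
  -- The `m`-th powers with equal integrals are those of `S - ‖x - y‖ ^ 2`, which takes the value
  -- `S` at `y`, and of `S - ‖x + h x - y‖ ^ 2`, which must therefore reach `S` as well.
  obtain ⟨S, hS⟩ := hK.exists_bound_of_continuousOn
    (f := fun x => max (‖x - y‖ ^ 2) (‖x + h x - y‖ ^ 2)) (by fun_prop)
  obtain ⟨x, hxK, hx⟩ := exists_le_abs_of_forall_integral_mul_pow_eq (μ := volume) hK hy
    (p := fun x => S - ‖x + h x - y‖ ^ 2) (q := fun x => S - ‖x - y‖ ^ 2)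
    hdet.continuousOn (by fun_prop) (by fun_prop)
    (fun x hx => sub_nonneg.2 ((le_max_left _ _).trans ((Real.le_norm_self _).trans (hS x hx))))
    (setIntegral_det_mul_sub_norm_sq_pow_eq hh hK h0 y S)
  have hle : ‖x + h x - y‖ ^ 2 ≤ S :=
    (le_max_right _ _).trans ((Real.le_norm_self _).trans (hS x hxK))
  refine ⟨x, sub_eq_zero.1 (norm_eq_zero.1 (pow_eq_zero_iff two_ne_zero |>.1 ?_))⟩
  rw [abs_of_nonneg (sub_nonneg.2 hle), sub_self, norm_zero] at hx
  exact le_antisymm (by linarith) (sq_nonneg _)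

theorem surjective_add_of_hasCompactSupport {h : E → E} (hh : Continuous h)
    (hcs : HasCompactSupport h) : Function.Surjective fun x => x + h x := by
  intro y
  obtain ⟨R, hR⟩ := hcs.isCompact.isBounded.subset_closedBall 0
  have h0 : ∀ x, R < ‖x‖ → h x = 0 := fun x hx =>
    image_eq_zero_of_notMem_tsupport fun hx' => hx.not_ge (by simpa using hR hx')
  set K := closedBall (0 : E) (max (R + 1) ‖y‖)
  have hK : IsCompact K := isCompact_closedBall _ _
  suffices y ∈ closure ((fun x => x + h x) '' K) by
    rw [(hK.image (by fun_prop)).isClosed.closure_eq] at this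
    exact image_subset_range _ _ this
  rw [Metric.mem_closure_iff]
  intro ε hε
  obtain ⟨δ, hδ, hhδ⟩ := Metric.uniformContinuous_iff.1
    (hcs.uniformContinuous_of_continuous hh) (ε / 2) (by positivity)
  obtain ⟨k, hk, hkh⟩ := hh.exists_contDiff_dist_le_of_forall_mem_ball_dist_le
    (lt_min hδ one_pos)
  have hk0 : ∀ x ∉ K, k x = 0 := by
    intro x hx
    have hxR : R + 1 < ‖x‖ := lt_of_le_of_lt (le_max_left _ _) (by simpa [K] using hx)
    have hnear : ∀ z ∈ ball x (min δ 1), dist (h z) (h x) ≤ 0 := fun z hz => by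
      have hz1 : ‖x - z‖ < 1 := by
        rw [← dist_eq_norm, dist_comm]; exact (mem_ball.1 hz).trans_le (min_le_right _ _)
      rw [h0 z (by linarith [norm_sub_norm_le x z]), h0 x (by linarith), dist_self]
    rw [← h0 x (by linarith)]
    exact dist_le_zero.1 (hkh x _ hnear)
  obtain ⟨x, hx⟩ := surjective_add_of_contDiff_of_hasCompactSupport
    (hk.of_le (by exact_mod_cast le_top)) (.intro hK hk0) y
  have hxK : x ∈ K := by
    by_contra hxK
    have : x = y := by simpa [hk0 x hxK] using hx
    exact hxK (by simp [K, this])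
  refine ⟨_, mem_image_of_mem _ hxK, ?_⟩
  have hclose : dist (k x) (h x) ≤ ε / 2 :=
    hkh x _ fun z hz => (hhδ ((mem_ball.1 hz).trans_le (min_le_left _ _))).le
  rw [← hx, dist_add_left]
  linarith

theorem subset_image_of_eqOn_frontier {B : Set E} (hB : Bornology.IsBounded B) {f : E → E}
    (hf : ContinuousOn f (closure B)) (hfr : EqOn f id (frontier B)) : B ⊆ f '' B := by
  classical
  intro y hy
  set h : E → E := (closure B).piecewise (fun x => f x - x) 0
  have hin : ∀ x ∈ closure B, h x = f x - x := fun x hx => piecewise_eq_of_mem _ _ _ hx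
  have hout : ∀ x ∉ closure B, h x = 0 := fun x hx => piecewise_eq_of_notMem _ _ _ hx
  have hh : Continuous h := by
    refine continuous_piecewise (fun x hx => ?_) ?_ continuousOn_const
    · exact sub_eq_zero.2 (hfr (frontier_closure_subset hx))
    · rw [closure_closure]
      exact hf.sub continuousOn_id
  obtain ⟨x, hx⟩ := surjective_add_of_hasCompactSupport hh (.intro hB.isCompact_closure hout) y
  rcases em (x ∈ closure B) with hxB | hxB
  · have hfx : f x = y := by simpa [hin x hxB] using hx
    refine ⟨x, by_contra fun hxB' => hxB' ?_, hfx⟩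
    have hxfr : f x = x := hfr ⟨hxB, fun hi => hxB' (interior_subset hi)⟩
    rwa [← hxfr, hfx]
  · have hxy : x = y := by simpa [hout x hxB] using hx
    exact absurd (subset_closure (hxy ▸ hy)) hxB

end Brouwer

section RadialPush

variable {E : Type*} [NormedAddCommGroup E] [NormedSpace ℝ E]

/-- The map pushing the punctured ball of radius `ε` about `c` radially onto its boundary sphere
and fixing every point outside the ball. -/
noncomputable def radialPush (c : E) (ε : ℝ) (y : E) : E :=
  c + max (ε / ‖y - c‖) 1 • (y - c)

theorem continuousOn_radialPush (c : E) (ε : ℝ) : ContinuousOn (radialPush c ε) {c}ᶜ := by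
  have hdiv : ContinuousOn (fun y => ε / ‖y - c‖) {c}ᶜ :=
    continuousOn_const.div (by fun_prop) fun y hy => norm_ne_zero_iff.2 (sub_ne_zero.2 hy)
  exact continuousOn_const.add ((hdiv.sup continuousOn_const).smul (by fun_prop))

theorem radialPush_of_le_dist {c y : E} {ε : ℝ} (hy : ε ≤ dist y c) : radialPush c ε y = y := by
  rw [dist_eq_norm] at hy
  rw [radialPush, max_eq_right (div_le_one_of_le₀ hy (norm_nonneg _)), one_smul,
    add_sub_cancel]

theorem radialPush_mem_sphere {c y : E} {ε : ℝ} (hε : 0 ≤ ε) (hyc : y ≠ c) (hy : dist y c ≤ ε) :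
    radialPush c ε y ∈ sphere c ε := by
  have hpos : 0 < ‖y - c‖ := norm_pos_iff.2 (sub_ne_zero.2 hyc)
  rw [dist_eq_norm] at hy
  rw [mem_sphere, dist_eq_norm, radialPush, max_eq_left ((one_le_div hpos).2 hy),
    add_sub_cancel_left, norm_smul, norm_div, norm_norm, div_mul_cancel₀ _ hpos.ne',
    Real.norm_of_nonneg hε]

end RadialPush

section InvarianceOfDomain

variable {E : Type*} [NormedAddCommGroup E] [InnerProductSpace ℝ E] [FiniteDimensional ℝ E]

theorem exists_eq_zero_of_norm_sub_le_half {k : E → E} (hk : ContinuousOn k (closedBall 0 1))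
    (hkx : ∀ x ∈ closedBall (0 : E) 1, ‖k x - x‖ ≤ 1 / 2) : ∃ x ∈ closedBall 0 1, k x = 0 := by
  set f : E → E := fun x => x + min 1 (2 - 2 * ‖x‖) • (k x - x)
  have hf : ContinuousOn f (closure (ball 0 1)) := by
    rw [closure_ball _ one_ne_zero]
    have hχ : Continuous fun x : E => min 1 (2 - 2 * ‖x‖) := by fun_prop
    exact continuousOn_id.add (hχ.continuousOn.smul (hk.sub continuousOn_id))
  have hfr : EqOn f id (frontier (ball 0 1)) := by
    intro x hx
    rw [frontier_ball _ one_ne_zero, mem_sphere_zero_iff_norm] at hx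
    simp [f, hx]
  obtain ⟨x, hx, hfx⟩ := subset_image_of_eqOn_frontier isBounded_ball hf hfr
    (mem_ball_self one_pos)
  have hx1 : ‖x‖ < 1 := mem_ball_zero_iff.1 hx
  have hxc : x ∈ closedBall (0 : E) 1 := ball_subset_closedBall hx
  have hχ : |min 1 (2 - 2 * ‖x‖)| ≤ 1 :=
    abs_le.2 ⟨by rw [le_min_iff]; constructor <;> linarith, min_le_left _ _⟩
  have hhalf : ‖x‖ ≤ 1 / 2 := calc
    ‖x‖ = |min 1 (2 - 2 * ‖x‖)| * ‖k x - x‖ := by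
      rw [← Real.norm_eq_abs, ← norm_smul, eq_neg_of_add_eq_zero_right hfx, norm_neg]
    _ ≤ 1 * (1 / 2) := mul_le_mul hχ (hkx x hxc) (norm_nonneg _) zero_le_one
    _ = 1 / 2 := one_mul _
  refine ⟨x, hxc, ?_⟩
  simpa [f, min_eq_left (show (1 : ℝ) ≤ 2 - 2 * ‖x‖ by linarith)] using hfx

theorem exists_contDiff_dist_le_of_isCompact {G : E → E} (hG : Continuous G) {S : Set E}
    (hS : IsCompact S) {η : ℝ} (hη : 0 < η) :
    ∃ P : E → E, ContDiff ℝ 1 P ∧ ∀ x ∈ S, dist (P x) (G x) ≤ η := by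
  have hu : UniformContinuousOn G (cthickening 1 S) :=
    hS.cthickening.uniformContinuousOn_of_continuous hG.continuousOn
  obtain ⟨δ, hδ, hGδ⟩ := Metric.uniformContinuousOn_iff.1 hu η hη
  obtain ⟨P, hP, hPG⟩ :=
    hG.exists_contDiff_dist_le_of_forall_mem_ball_dist_le (lt_min hδ one_pos)
  refine ⟨P, hP.of_le (by exact_mod_cast le_top), fun x hx => hPG x η fun z hz => ?_⟩
  obtain ⟨hzδ, hz1⟩ := lt_min_iff.1 (mem_ball.1 hz)
  exact (hGδ z (mem_cthickening_of_dist_le z x 1 S hx hz1.le) x (self_subset_cthickening S hx)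
    hzδ).le

theorem exists_continuous_ne_zero_dist_le [MeasurableSpace E] [BorelSpace E] {G : E → E}
    (hG : Continuous G) {Z L : Set E} (hZ : IsCompact Z) (hZ0 : volume Z = 0) (hL : IsCompact L)
    (hGL : ∀ y ∈ L, G y ≠ 0) {η : ℝ} (hη : 0 < η) :
    ∃ P : E → E, Continuous P ∧ ∀ y ∈ Z ∪ L, P y ≠ 0 ∧ dist (P y) (G y) ≤ η := by
  obtain ⟨δ, hδ, hGδ⟩ := hL.exists_forall_le' hG.norm.continuousOn
    fun y hy => norm_pos_iff.2 (hGL y hy)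
  obtain ⟨κ, hκ, hκηδ⟩ := exists_between (lt_min hη hδ)
  obtain ⟨hκη, hκδ⟩ := lt_min_iff.1 hκηδ
  obtain ⟨P, hP, hPG⟩ := exists_contDiff_dist_le_of_isCompact hG (hZ.union hL) (half_pos hκ)
  obtain ⟨w, hw, hwP⟩ : ∃ w ∈ closedBall (0 : E) (κ / 2), w ∉ P '' Z := by
    refine not_subset.1 fun hsub => (measure_closedBall_pos volume (0 : E) (half_pos hκ)).ne' ?_
    exact measure_mono_null hsub (addHaar_image_eq_zero_of_differentiableOn_of_addHaar_eq_zero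
      volume (hP.differentiable one_ne_zero).differentiableOn hZ0)
  have hclose : ∀ y ∈ Z ∪ L, dist (P y - w) (G y) ≤ κ := fun y hy => calc
    dist (P y - w) (G y) ≤ dist (P y - w) (P y) + dist (P y) (G y) := dist_triangle _ _ _
    _ ≤ κ / 2 + κ / 2 := by
      gcongr
      · simpa using hw
      · exact hPG y hy
    _ = κ := add_halves κ
  refine ⟨fun y => P y - w, hP.continuous.sub continuous_const, fun y hy =>
    ⟨fun h0 => ?_, (hclose y hy).trans hκη.le⟩⟩
  rcases hy with hy | hy
  · exact hwP ⟨y, hy, sub_eq_zero.1 h0⟩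
  · have hGy := hclose y (.inr hy)
    rw [show P y - w = 0 from h0, dist_zero_left] at hGy
    linarith [hGδ y hy]

theorem exists_continuousOn_ne_zero_dist_le {L : Set E} (hL : IsCompact L) {y₀ : E}
    (hLy₀ : L ∉ 𝓝 y₀) {G : E → E} (hG : Continuous G) (hG0 : G y₀ = 0)
    (hGL : ∀ y ∈ L, G y = 0 → y = y₀) {η : ℝ} (hη : 0 < η) :
    ∃ P : E → E, ContinuousOn P L ∧ ∀ y ∈ L, P y ≠ 0 ∧ dist (P y) (G y) ≤ η := by
  borelize E
  obtain ⟨ρ, hρ, hGρ⟩ := Metric.nhds_basis_closedBall.mem_iff.1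
    (hG.continuousAt.preimage_mem_nhds (closedBall_mem_nhds (G y₀) (show 0 < η / 4 by positivity)))
  have hε : 0 < ρ / 2 := by positivity
  obtain ⟨c, hcy₀, hcL⟩ : ∃ c ∈ ball y₀ (ρ / 2), c ∉ L :=
    not_subset.1 fun hsub => hLy₀ (mem_of_superset (ball_mem_nhds y₀ hε) hsub)
  have hnear : ∀ y ∈ closedBall c (ρ / 2), dist (G y) 0 ≤ η / 4 := fun y hy =>
    hG0 ▸ hGρ (mem_closedBall.2 (by
      linarith [dist_triangle y c y₀, mem_closedBall.1 hy, mem_ball.1 hcy₀]))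
  have hLc : ∀ y ∈ L \ ball c (ρ / 2), G y ≠ 0 := by
    rintro y ⟨hyL, hy⟩ hGy
    rw [hGL y hyL hGy] at hy
    exact hy (mem_ball'.2 hcy₀)
  obtain ⟨P, hP, hPG⟩ := exists_continuous_ne_zero_dist_le hG (isCompact_sphere c (ρ / 2))
    (Measure.addHaar_sphere_of_ne_zero volume c hε.ne') (hL.diff isOpen_ball) hLc
    (half_pos hη)
  have hLc' : ∀ y ∈ L, y ≠ c := fun y hy h => hcL (h ▸ hy)
  refine ⟨P ∘ radialPush c (ρ / 2),
    hP.comp_continuousOn ((continuousOn_radialPush c _).mono hLc'), fun y hy => ?_⟩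
  rw [Function.comp_apply]
  rcases le_total (ρ / 2) (dist y c) with hyc | hyc
  · rw [radialPush_of_le_dist hyc]
    obtain ⟨hne, hle⟩ := hPG y (.inr ⟨hy, fun h => hyc.not_gt h⟩)
    exact ⟨hne, hle.trans (half_le_self hη.le)⟩
  · have hz := radialPush_mem_sphere hε.le (hLc' y hy) hyc
    obtain ⟨hne, hle⟩ := hPG _ (.inl hz)
    refine ⟨hne, ?_⟩
    linarith [hnear _ (sphere_subset_closedBall hz), hnear y hyc,
      dist_triangle (P (radialPush c (ρ / 2) y)) (G (radialPush c (ρ / 2) y)) (G y),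
      dist_triangle_right (G (radialPush c (ρ / 2) y)) (G y) 0]

theorem image_closedBall_mem_nhds_of_injOn {f : E → E} (hf : ContinuousOn f (closedBall 0 1))
    (hinj : InjOn f (closedBall 0 1)) : f '' closedBall 0 1 ∈ 𝓝 (f 0) := by
  by_contra hnot
  set K : Set E := closedBall 0 1
  have hK : IsCompact K := isCompact_closedBall _ _
  have h0K : (0 : E) ∈ K := mem_closedBall_self zero_le_one
  have hemb : IsClosedEmbedding (K.domRestrict f) := by
    have : CompactSpace K := isCompact_iff_compactSpace.1 hK
    exact hf.domRestrict.isClosedEmbedding (injOn_iff_injective.1 hinj)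
  obtain ⟨G, hG⟩ := ContinuousMap.exists_extension hemb
    (⟨Subtype.val, continuous_subtype_val⟩ : C(K, E))
  have hGf : ∀ x ∈ K, G (f x) = x := fun x hx => DFunLike.congr_fun hG ⟨x, hx⟩
  have hGzero : ∀ y ∈ f '' K, G y = 0 → y = f 0 := by
    rintro _ ⟨x, hx, rfl⟩ h0
    rw [← hGf x hx, h0]
  obtain ⟨P, hP, hPG⟩ := exists_continuousOn_ne_zero_dist_le (hK.image_of_continuousOn hf) hnot
    G.continuous (hGf 0 h0K) hGzero one_half_pos
  obtain ⟨x, hx, hPx⟩ := exists_eq_zero_of_norm_sub_le_half (hP.comp hf (mapsTo_image f K))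
    fun x hx => by
      simpa only [dist_eq_norm, hGf x hx, Function.comp_apply] using
        (hPG (f x) (mem_image_of_mem f hx)).2
  exact (hPG (f x) (mem_image_of_mem f hx)).1 hPx

theorem isOpen_image_of_continuousOn_of_injOn {f : E → E} {V : Set E} (hV : IsOpen V)
    (hf : ContinuousOn f V) (hinj : InjOn f V) : IsOpen (f '' V) := by
  rw [isOpen_iff_mem_nhds]
  rintro _ ⟨x, hx, rfl⟩
  obtain ⟨r, hr, hrV⟩ := Metric.nhds_basis_closedBall.mem_iff.1 (hV.mem_nhds hx)
  have hmaps : MapsTo (fun u : E => x + r • u) (closedBall 0 1) V := fun u hu => hrV <| by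
    rw [mem_closedBall_zero_iff] at hu
    simpa [dist_eq_norm, norm_smul, abs_of_pos hr] using mul_le_of_le_one_right hr.le hu
  have hscaled := image_closedBall_mem_nhds_of_injOn (hf.comp (by fun_prop) hmaps)
    (hinj.comp (fun u _ v _ h => smul_right_injective E hr.ne' (add_left_cancel h)) hmaps)
  rw [image_comp] at hscaled
  exact mem_of_superset (by simpa using hscaled) (image_mono hmaps.image_subset)

end InvarianceOfDomain

section LoopClass

variable {Y : Type*} [TopologicalSpace Y] {y₀ : Y}

/-- The element of the fundamental group represented by a path that is closed up by means of a
chosen path `β y` from the base point to every point `y`. -/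
noncomputable def loopClass (β : ∀ y, Path y₀ y) {x y : Y} (p : Path x y) : FundamentalGroup Y y₀ :=
  .fromPath (.mk (((β x).trans p).trans (β y).symm))

variable {β : ∀ y, Path y₀ y} {x y z : Y}

theorem loopClass_eq_of_homotopic {p q : Path x y} (h : p.Homotopic q) :
    loopClass β p = loopClass β q :=
  Path.Homotopic.Quotient.eq.2 (((Path.Homotopic.refl _).hcomp h).hcomp (.refl _))

theorem loopClass_congr {x' y' : Y} {p : Path x y} {q : Path x' y'} (h : ∀ t, p t = q t) :
    loopClass β p = loopClass β q := by
  obtain rfl : x = x' := by simpa using h 0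
  obtain rfl : y = y' := by simpa using h 1
  rw [Path.ext (funext h)]

theorem loopClass_trans (p : Path x y) (q : Path y z) :
    loopClass β (p.trans q) = loopClass β q * loopClass β p := by
  simp only [loopClass, FundamentalGroup.mul_def, Path.Homotopic.Quotient.mk_trans,
    Path.Homotopic.Quotient.mk_symm]
  grind

theorem loopClass_refl (x : Y) : loopClass β (Path.refl x) = 1 := by
  simp only [loopClass, Path.Homotopic.Quotient.mk_trans, Path.Homotopic.Quotient.mk_symm,
    Path.Homotopic.Quotient.mk_refl, FundamentalGroup.one_def]
  grind

theorem homotopic_refl_of_loopClass_eq_one {p : Path x x} (h : loopClass β p = 1) :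
    p.Homotopic (Path.refl x) := by
  simp only [loopClass, Path.Homotopic.Quotient.mk_trans, Path.Homotopic.Quotient.mk_symm,
    FundamentalGroup.one_def] at h
  rw [← Path.Homotopic.Quotient.eq, Path.Homotopic.Quotient.mk_refl]
  generalize Path.Homotopic.Quotient.mk p = P at h ⊢
  generalize Path.Homotopic.Quotient.mk (β x) = B at h
  replace h : (B.trans P).trans B.symm = .refl y₀ := h
  calc P = B.symm.trans (((B.trans P).trans B.symm).trans B) := by grind
    _ = B.symm.trans ((Path.Homotopic.Quotient.refl y₀).trans B) := by rw [h]
    _ = .refl x := by grind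

theorem loopClass_eq_one_of_isSimplyConnected {S : Set Y} (hS : IsSimplyConnected S)
    {p : Path x y} (hp : ∀ t, p t ∈ S) (hx : ∀ t, β x t ∈ S) (hy : ∀ t, β y t ∈ S) :
    loopClass β p = 1 := by
  have hmem : ∀ t, ((β x).trans p).trans (β y).symm t ∈ S := fun t => by
    simp only [Path.trans_apply, Path.symm_apply]
    split_ifs
    exacts [hx _, hp _, hy _]
  obtain ⟨H, -⟩ := (isSimplyConnected_iff_exists_homotopy_refl_forall_mem.1 hS).2 y₀ _ hmem
  exact Path.Homotopic.Quotient.eq.2 ⟨H⟩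

theorem loopClass_subpath_succ (p : Path x y) (a b c : I) :
    loopClass β (p.subpath a c) = loopClass β (p.subpath b c) * loopClass β (p.subpath a b) := by
  rw [← loopClass_trans]
  exact (loopClass_eq_of_homotopic ⟨Path.Homotopy.subpathTransSubpath p a b c⟩).symm

theorem trans_homotopic_trans_of_square (F : C(I × I, Y)) {x₀₀ x₁₀ x₀₁ x₁₁ : Y}
    {bottom : Path x₀₀ x₁₀} {right : Path x₁₀ x₁₁} {left : Path x₀₀ x₀₁} {top : Path x₀₁ x₁₁}
    (hb : ∀ s, F (s, 0) = bottom s) (hr : ∀ s, F (1, s) = right s)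
    (hl : ∀ s, F (0, s) = left s) (ht : ∀ s, F (s, 1) = top s) :
    (bottom.trans right).Homotopic (left.trans top) := by
  have : ContractibleSpace I := (convex_Icc (0 : ℝ) 1).contractibleSpace ⟨0, by simp⟩
  let e : Path (0 : I) 1 := ⟨.id I, rfl, rfl⟩
  obtain rfl : F (0, 0) = x₀₀ := by simp [hb]
  obtain rfl : F (1, 0) = x₁₀ := by simp [hb]
  obtain rfl : F (0, 1) = x₀₁ := by simp [hl]
  obtain rfl : F (1, 1) = x₁₁ := by simp [hr]
  have h := (SimplyConnectedSpace.paths_homotopic ((e.prod (.refl 0)).trans ((Path.refl 1).prod e))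
    (((Path.refl 0).prod e).trans (e.prod (.refl 1)))).map F
  rw [Path.map_trans, Path.map_trans] at h
  convert h using 2 <;> ext s
  exacts [(hb s).symm, (hr s).symm, (hl s).symm, (ht s).symm]

theorem exists_forall_path_mem {U V : Set Y} (hU : IsPathConnected U) (hV : IsPathConnected V)
    (hUV : IsPathConnected (U ∩ V)) (hcover : U ∪ V = univ) (hy₀ : y₀ ∈ U ∩ V) :
    ∃ β : ∀ y, Path y₀ y, ∀ y, (y ∈ U → ∀ t, β y t ∈ U) ∧ (y ∈ V → ∀ t, β y t ∈ V) := by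
  suffices h : ∀ y, ∃ p : Path y₀ y, (y ∈ U → ∀ t, p t ∈ U) ∧ (y ∈ V → ∀ t, p t ∈ V) from
    ⟨fun y => (h y).choose, fun y => (h y).choose_spec⟩
  intro y
  by_cases hyU : y ∈ U <;> by_cases hyV : y ∈ V
  · obtain ⟨p, hp⟩ := hUV.joinedIn y₀ hy₀ y ⟨hyU, hyV⟩
    exact ⟨p, fun _ t => (hp t).1, fun _ t => (hp t).2⟩
  · obtain ⟨p, hp⟩ := hU.joinedIn y₀ hy₀.1 y hyU
    exact ⟨p, fun _ => hp, fun h => absurd h hyV⟩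
  · obtain ⟨p, hp⟩ := hV.joinedIn y₀ hy₀.2 y hyV
    exact ⟨p, fun h => absurd h hyU, fun _ => hp⟩
  · exact (hcover.symm ▸ mem_univ y : y ∈ U ∪ V).elim (absurd · hyU) (absurd · hyV)

theorem simplyConnectedSpace_of_isOpen_union {U V : Set Y} (hUo : IsOpen U) (hVo : IsOpen V)
    (hU : IsSimplyConnected U) (hV : IsSimplyConnected V) (hUV : IsPathConnected (U ∩ V))
    (hcover : U ∪ V = univ) : SimplyConnectedSpace Y := by
  obtain ⟨y₀, hy₀⟩ := hUV.nonempty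
  obtain ⟨β, hβ⟩ := exists_forall_path_mem hU.isPathConnected hV.isPathConnected hUV hcover hy₀
  have hpath : PathConnectedSpace Y := by
    rw [pathConnectedSpace_iff_univ, ← hcover]
    exact hU.isPathConnected.union hV.isPathConnected ⟨y₀, hy₀⟩
  refine simply_connected_iff_loops_nullhomotopic.2 ⟨hpath, fun x p => ?_⟩
  have hpre : (univ : Set I) ⊆ ⋃ i : Bool, p ⁻¹' cond i U V := fun s _ => by
    simpa [or_comm] using (hcover.symm ▸ mem_univ (p s) : p s ∈ U ∪ V)
  obtain ⟨t, ht₀, ht, ⟨m, hm⟩, hsub⟩ := exists_monotone_Icc_subset_open_cover_unitInterval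
    (fun i => (Bool.rec hVo hUo i : IsOpen (cond i U V)).preimage p.continuous) hpre
  have hpiece : ∀ k, loopClass β (p.subpath (t k) (t (k + 1))) = 1 := fun k => by
    obtain ⟨i, hi⟩ := hsub k
    have hmem : ∀ s, p.subpath (t k) (t (k + 1)) s ∈ cond i U V := fun s =>
      hi ⟨Icc.le_convexComb (ht k.le_succ) s, Icc.convexComb_le (ht k.le_succ) s⟩
    have h₀ : p (t k) ∈ cond i U V := hi (left_mem_Icc.2 (ht k.le_succ))
    have h₁ : p (t (k + 1)) ∈ cond i U V := hi (right_mem_Icc.2 (ht k.le_succ))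
    cases i
    · exact loopClass_eq_one_of_isSimplyConnected hV hmem ((hβ _).2 h₀) ((hβ _).2 h₁)
    · exact loopClass_eq_one_of_isSimplyConnected hU hmem ((hβ _).1 h₀) ((hβ _).1 h₁)
  have hinit : ∀ k, loopClass β (p.subpath 0 (t k)) = 1 := fun k => by
    induction k with
    | zero => rw [ht₀, Path.subpath_self, loopClass_refl]
    | succ k ih => rw [loopClass_subpath_succ p 0 (t k), hpiece, ih, mul_one]
  refine homotopic_refl_of_loopClass_eq_one (β := β) ?_
  rw [← hinit m, hm m le_rfl, Path.subpath_zero_one]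
  exact loopClass_congr fun _ => rfl

end LoopClass

section SimplyConnectedSubset

variable {X : Type*} [TopologicalSpace X] {S A : Set X} {a₀ : S}

open Classical in
/-- The class `loopClass` in a subset `S` of a path in the ambient space, with the value `1`
for paths that leave `S`. -/
noncomputable def loopClassIn (β : ∀ y : S, Path a₀ y) {x y : X} (p : Path x y) :
    FundamentalGroup S a₀ :=
  if h : ∀ t, p t ∈ S then
    loopClass β (x := ⟨x, by simpa using h 0⟩) (y := ⟨y, by simpa using h 1⟩)
      ⟨⟨fun t => ⟨p t, h t⟩, by fun_prop⟩, by simp, by simp⟩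
  else 1

variable {β : ∀ y : S, Path a₀ y}

theorem loopClassIn_eq_loopClass {x y : X} {x' y' : S} {p : Path x y} {q : Path x' y'}
    (h : ∀ t, p t = q t) : loopClassIn β p = loopClass β q := by
  rw [loopClassIn, dif_pos fun t => h t ▸ (q t).2]
  exact loopClass_congr fun t => Subtype.ext (h t)

theorem loopClassIn_eq_one_of_forall_eq {x y c : X} {p : Path x y} (hc : c ∈ S)
    (hp : ∀ t, p t = c) : loopClassIn β p = 1 := by
  rw [loopClassIn_eq_loopClass (q := .refl ⟨c, hc⟩) hp, loopClass_refl]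

theorem isSimplyConnected_preimage_val (hA : IsSimplyConnected A) (hAS : A ⊆ S) :
    IsSimplyConnected ((↑) ⁻¹' A : Set S) := by
  rwa [← IsEmbedding.subtypeVal.isSimplyConnected_image, Subtype.image_preimage_coe,
    inter_eq_right.2 hAS]

theorem loopClassIn_eq_one_of_isSimplyConnected (hA : IsSimplyConnected A) (hAS : A ⊆ S)
    (hβ : ∀ y : S, ↑y ∈ A → ∀ t, ↑(β y t) ∈ A) {V : Set X} (hSV : S ∩ V ⊆ A) {x y : X}
    {p : Path x y} (hp : ∀ t, p t ∈ V) : loopClassIn β p = 1 := by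
  rw [loopClassIn]
  split_ifs with h
  · have hmem : ∀ t, p t ∈ A := fun t => hSV ⟨h t, hp t⟩
    exact loopClass_eq_one_of_isSimplyConnected (isSimplyConnected_preimage_val hA hAS) hmem
      (hβ _ (by simpa using hmem 0)) (hβ _ (by simpa using hmem 1))
  · rfl

theorem loopClassIn_mul_eq_of_square (F : C(I × I, X)) (hF : ∀ z, F z ∈ S) {x₀₀ x₁₀ x₀₁ x₁₁ : X}
    {bottom : Path x₀₀ x₁₀} {right : Path x₁₀ x₁₁} {left : Path x₀₀ x₀₁} {top : Path x₀₁ x₁₁}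
    (hb : ∀ s, bottom s = F (s, 0)) (hr : ∀ s, right s = F (1, s))
    (hl : ∀ s, left s = F (0, s)) (ht : ∀ s, top s = F (s, 1)) :
    loopClassIn β right * loopClassIn β bottom = loopClassIn β top * loopClassIn β left := by
  let G : C(I × I, S) := ⟨fun z => ⟨F z, hF z⟩, by fun_prop⟩
  let b : Path (G (0, 0)) (G (1, 0)) := ⟨⟨fun s => G (s, 0), by fun_prop⟩, rfl, rfl⟩
  let r : Path (G (1, 0)) (G (1, 1)) := ⟨⟨fun s => G (1, s), by fun_prop⟩, rfl, rfl⟩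
  let l : Path (G (0, 0)) (G (0, 1)) := ⟨⟨fun s => G (0, s), by fun_prop⟩, rfl, rfl⟩
  let t : Path (G (0, 1)) (G (1, 1)) := ⟨⟨fun s => G (s, 1), by fun_prop⟩, rfl, rfl⟩
  rw [loopClassIn_eq_loopClass (q := b) hb, loopClassIn_eq_loopClass (q := r) hr,
    loopClassIn_eq_loopClass (q := l) hl, loopClassIn_eq_loopClass (q := t) ht,
    ← loopClass_trans, ← loopClass_trans]
  exact loopClass_eq_of_homotopic (trans_homotopic_trans_of_square G
    (fun _ => rfl) (fun _ => rfl) (fun _ => rfl) fun _ => rfl)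

/-- The horizontal path of height `v` in a map from the square. -/
def rowPath (F : C(I × I, X)) (v : I) : Path (F (0, v)) (F (1, v)) :=
  ⟨⟨fun u => F (u, v), by fun_prop⟩, rfl, rfl⟩

/-- The vertical path of abscissa `u` in a map from the square. -/
def colPath (F : C(I × I, X)) (u : I) : Path (F (u, 0)) (F (u, 1)) :=
  ⟨⟨fun v => F (u, v), by fun_prop⟩, rfl, rfl⟩

theorem subpath_rowPath_apply (F : C(I × I, X)) (u u' v s : I) :
    (rowPath F v).subpath u u' s = F (Icc.convexComb u u' s, v) := rfl

theorem subpath_colPath_apply (F : C(I × I, X)) (u v v' s : I) :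
    (colPath F u).subpath v v' s = F (u, Icc.convexComb v v' s) := rfl

theorem loopClassIn_colPath_mul_rowPath (F : C(I × I, X)) {O V : Set X} (hOS : O ⊆ S)
    (hAS : A ⊆ S) (hSV : S ∩ V ⊆ A) (hA : IsSimplyConnected A)
    (hβ : ∀ y : S, ↑y ∈ A → ∀ t, ↑(β y t) ∈ A) {u u' v v' : I} (hu : u ≤ u') (hv : v ≤ v')
    (hF : MapsTo F (Icc u u' ×ˢ Icc v v') O ∨ MapsTo F (Icc u u' ×ˢ Icc v v') V) :
    loopClassIn β ((colPath F u').subpath v v') * loopClassIn β ((rowPath F v).subpath u u') =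
      loopClassIn β ((rowPath F v').subpath u u') *
        loopClassIn β ((colPath F u).subpath v v') := by
  let cell : C(I × I, I × I) :=
    ⟨fun z => (Icc.convexComb u u' z.1, Icc.convexComb v v' z.2),
      ((Icc.continuous_convexComb u u').comp continuous_fst).prodMk
        ((Icc.continuous_convexComb v v').comp continuous_snd)⟩
  have hcell : ∀ z, cell z ∈ Icc u u' ×ˢ Icc v v' := fun z =>
    ⟨⟨Icc.le_convexComb hu _, Icc.convexComb_le hu _⟩,
      ⟨Icc.le_convexComb hv _, Icc.convexComb_le hv _⟩⟩
  have hbottom : ∀ s, (rowPath F v).subpath u u' s = F (cell (s, 0)) := by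
    simp [subpath_rowPath_apply, cell]
  have hright : ∀ s, (colPath F u').subpath v v' s = F (cell (1, s)) := by
    simp [subpath_colPath_apply, cell]
  have hleft : ∀ s, (colPath F u).subpath v v' s = F (cell (0, s)) := by
    simp [subpath_colPath_apply, cell]
  have htop : ∀ s, (rowPath F v').subpath u u' s = F (cell (s, 1)) := by
    simp [subpath_rowPath_apply, cell]
  rcases hF with hO | hV
  · exact loopClassIn_mul_eq_of_square (F.comp cell) (fun z => hOS (hO (hcell z)))
      hbottom hright hleft htop
  · have hone {x y : X} {p : Path x y} {e : I → I × I} (hp : ∀ s, p s = F (cell (e s))) :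
        loopClassIn β p = 1 :=
      loopClassIn_eq_one_of_isSimplyConnected hA hAS hβ hSV fun s => hp s ▸ hV (hcell _)
    rw [hone hbottom, hone hright, hone hleft, hone htop]

theorem eq_one_of_forall_mul_eq {G : Type*} [Group G] {H V : ℕ → ℕ → G}
    (hcell : ∀ i j, V (i + 1) j * H i j = H i (j + 1) * V i j) {m : ℕ} (hleft : ∀ j, V 0 j = 1)
    (hright : ∀ j, V m j = 1) (htop : ∀ i, H i m = 1) {h : ℕ → G} (h₀ : h 0 = 1)
    (h_succ : ∀ i, h (i + 1) = H i 0 * h i) : h m = 1 := by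
  let row (i j : ℕ) : G := Nat.rec 1 (fun i x => H i j * x) i
  have hstep : ∀ i j, V i j * row i j = row i (j + 1) := fun i j => by
    induction i with
    | zero => simp [row, hleft]
    | succ i ih => calc
        V (i + 1) j * (H i j * row i j) = H i (j + 1) * (V i j * row i j) := by
          rw [← mul_assoc, hcell, mul_assoc]
        _ = row (i + 1) (j + 1) := by rw [ih]
  have hbottom : ∀ i, h i = row i 0 := Nat.rec h₀ fun i ih => by rw [h_succ, ih]
  have hrow : ∀ j, row m j = row m 0 := Nat.rec rfl fun j ih => by
    rw [← hstep, hright, one_mul, ih]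
  have hrow_top : ∀ i, row i m = 1 := Nat.rec rfl fun i ih => by
    change H i m * row i m = 1
    rw [ih, htop, one_mul]
  rw [hbottom, ← hrow m, hrow_top]

theorem loopClass_eq_one_of_homotopy {x : S} (p : Path x x) (F : C(I × I, X))
    (hbottom : ∀ s, F (s, 0) = p s) (htop : ∀ s, F (s, 1) = x) (hleft : ∀ s, F (0, s) = x)
    (hright : ∀ s, F (1, s) = x) {O V : Set X} (hO : IsOpen O) (hV : IsOpen V)
    (hcover : O ∪ V = univ) (hOS : O ⊆ S) (hAS : A ⊆ S) (hSV : S ∩ V ⊆ A)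
    (hA : IsSimplyConnected A) (hβ : ∀ y : S, ↑y ∈ A → ∀ t, ↑(β y t) ∈ A) :
    loopClass β p = 1 := by
  have hpre : (univ : Set (I × I)) ⊆ ⋃ i : Bool, F ⁻¹' cond i O V := fun z _ => by
    simpa [or_comm] using (hcover.symm ▸ mem_univ (F z) : F z ∈ O ∪ V)
  obtain ⟨t, ht₀, ht, ⟨m, hm⟩, hsub⟩ := exists_monotone_Icc_subset_open_cover_unitInterval_prod_self
    (fun i => (Bool.rec hV hO i : IsOpen (cond i O V)).preimage F.continuous) hpre
  have hcell (i j : ℕ) := loopClassIn_colPath_mul_rowPath F hOS hAS hSV hA hβ (ht i.le_succ)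
    (ht j.le_succ) (by
      obtain ⟨k, hk⟩ := hsub i j
      cases k
      exacts [.inr hk, .inl hk])
  have hp : loopClass β (p.subpath 0 (t m)) = 1 := by
    refine eq_one_of_forall_mul_eq (h := fun i => loopClass β (p.subpath 0 (t i)))
      (V := fun i j => loopClassIn β ((colPath F (t i)).subpath (t j) (t (j + 1))))
      (H := fun i j => loopClassIn β ((rowPath F (t j)).subpath (t i) (t (i + 1)))) hcell
      (fun j => ?_) (fun j => ?_) (fun i => ?_) ?_ fun i => ?_
    · exact loopClassIn_eq_one_of_forall_eq x.2 fun s => by rw [subpath_colPath_apply, ht₀, hleft]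
    · exact loopClassIn_eq_one_of_forall_eq x.2 fun s => by
        rw [subpath_colPath_apply, hm m le_rfl, hright]
    · exact loopClassIn_eq_one_of_forall_eq x.2 fun s => by
        rw [subpath_rowPath_apply, hm m le_rfl, htop]
    · rw [ht₀, Path.subpath_self, loopClass_refl]
    · rw [loopClass_subpath_succ p 0 (t i)]
      exact congrArg (· * _) (loopClassIn_eq_loopClass fun s => by
        rw [subpath_rowPath_apply, ht₀, hbottom]; rfl).symm
  rw [← hp, hm m le_rfl, Path.subpath_zero_one]
  exact loopClass_congr fun _ => rfl

theorem isSimplyConnected_of_isOpen_union [SimplyConnectedSpace X] {O V : Set X} (hO : IsOpen O)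
    (hV : IsOpen V) (hcover : O ∪ V = univ) (hOS : O ⊆ S) (hAS : A ⊆ S) (hSV : S ∩ V ⊆ A)
    (hA : IsSimplyConnected A) (hS : IsPathConnected S) : IsSimplyConnected S := by
  have := isPathConnected_iff_pathConnectedSpace.1 hS
  obtain ⟨a, ha⟩ := hA.nonempty
  have hA' := (isSimplyConnected_preimage_val hA hAS).isPathConnected
  obtain ⟨β, hβ⟩ := exists_forall_path_mem (y₀ := (⟨a, hAS ha⟩ : S))
    (pathConnectedSpace_iff_univ.1 this) hA' (by rwa [univ_inter]) (univ_union _) ⟨trivial, ha⟩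
  refine simply_connected_iff_loops_nullhomotopic.2 ⟨this, fun x p => ?_⟩
  obtain ⟨F⟩ := SimplyConnectedSpace.paths_homotopic (p.map continuous_subtype_val) (.refl (x : X))
  refine homotopic_refl_of_loopClass_eq_one (β := β) (loopClass_eq_one_of_homotopy p
    (F.toContinuousMap.comp .prodSwap) (fun _ => F.apply_zero _) (fun _ => F.apply_one _)
    (fun _ => F.source _) (fun _ => F.target _) hO hV hcover hOS hAS hSV hA fun y => (hβ y).2)

end SimplyConnectedSubset

section Stereographic

variable {E : Type*} [NormedAddCommGroup E] [InnerProductSpace ℝ E] {n : ℕ}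
  [Fact (Module.finrank ℝ E = n + 1)] {v x y : sphere (0 : E) 1}

theorem mem_stereographic'_source : x ∈ (stereographic' n v).source ↔ x ≠ v := by
  simp

theorem stereographic'_symm_stereographic' (hx : x ≠ v) :
    (stereographic' n v).symm (stereographic' n v x) = x :=
  (stereographic' n v).left_inv (mem_stereographic'_source.2 hx)

theorem stereographic'_stereographic'_symm (z : EuclideanSpace ℝ (Fin n)) :
    stereographic' n v ((stereographic' n v).symm z) = z :=
  (stereographic' n v).right_inv (by simp)

theorem stereographic'_symm_ne (z : EuclideanSpace ℝ (Fin n)) :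
    (stereographic' n v).symm z ≠ v :=
  mem_stereographic'_source.1 ((stereographic' n v).map_target (by simp))

theorem continuousOn_stereographic' : ContinuousOn (stereographic' n v) {v}ᶜ := by
  simpa using (stereographic' n v).continuousOn

theorem continuous_stereographic'_symm : Continuous (stereographic' n v).symm := by
  rw [← continuousOn_univ]
  simpa using (stereographic' n v).continuousOn_symm

theorem injOn_stereographic' : InjOn (stereographic' n v) {v}ᶜ := by
  simpa using (stereographic' n v).injOn

theorem norm_stereographic'_sq (hx : x ≠ v) :
    ‖stereographic' n v x‖ ^ 2 = 16 / dist x v ^ 2 - 4 := by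
  set a : ℝ := inner ℝ (v : E) x
  have hproj := Submodule.norm_sq_eq_add_norm_sq_projection (x : E) (ℝ ∙ (v : E))
  have hline : ‖(ℝ ∙ (v : E)).orthogonalProjectionOnto (x : E)‖ = |a| := by
    simpa [norm_smul] using
      congrArg norm (Submodule.starProjection_unit_singleton ℝ (norm_eq_of_mem_sphere v) (x : E))
  rw [hline, sq_abs, norm_eq_of_mem_sphere] at hproj
  have hnorm : ‖stereographic' n v x‖ = ‖stereoToFun (v : E) x‖ :=
    (OrthonormalBasis.fromOrthogonalSpanSingleton n
      (ne_zero_of_mem_unit_sphere v)).repr.norm_map _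
  have hdist : dist x v ^ 2 = 2 - 2 * a := by
    rw [Subtype.dist_eq, dist_eq_norm, norm_sub_sq_real, real_inner_comm,
      norm_eq_of_mem_sphere, norm_eq_of_mem_sphere]
    ring
  have ha : 1 - a ≠ 0 := fun h => hx <| dist_eq_zero.1 <| pow_eq_zero_iff two_ne_zero |>.1 <| by
    linarith
  calc
    ‖stereographic' n v x‖ ^ 2 = (2 / (1 - a)) ^ 2 * (1 - a ^ 2) := by
      rw [hnorm, stereoToFun_apply, norm_smul, mul_pow, Real.norm_eq_abs, sq_abs,
        innerSL_apply_apply]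
      congr 1
      linarith
    _ = 16 / dist x v ^ 2 - 4 := by
      rw [hdist]
      field_simp
      ring

theorem norm_stereographic'_lt (hy : y ≠ v) (h : dist y v < dist x v) :
    ‖stereographic' n v x‖ < ‖stereographic' n v y‖ := by
  have hy0 : 0 < dist y v := dist_pos.2 hy
  refine lt_of_pow_lt_pow_left₀ 2 (norm_nonneg _) ?_
  rw [norm_stereographic'_sq hy, norm_stereographic'_sq (dist_pos.1 (hy0.trans h))]
  gcongr

end Stereographic

section Sphere

variable {E : Type*} [NormedAddCommGroup E] [InnerProductSpace ℝ E] {n : ℕ}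
  {v x : sphere (0 : E) 1}

theorem isSimplyConnected_compl_singleton (hE : Module.finrank ℝ E = n + 1) :
    IsSimplyConnected ({v}ᶜ : Set (sphere (0 : E) 1)) := by
  have := Fact.mk hE
  have e := (stereographic' n v).toHomeomorphSourceTarget
  rw [stereographic'_source, stereographic'_target] at e
  exact (e.trans (Homeomorph.Set.univ _)).toHomotopyEquiv.simplyConnectedSpace

theorem isPathConnected_compl_pair (hE : Module.finrank ℝ E = n + 1) (hn : 2 ≤ n) (hxv : x ≠ v) :
    IsPathConnected ({v}ᶜ ∩ {x}ᶜ : Set (sphere (0 : E) 1)) := by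
  have := Fact.mk hE
  have himage : ({v}ᶜ ∩ {x}ᶜ : Set (sphere (0 : E) 1)) =
      (stereographic' n v).symm '' {stereographic' n v x}ᶜ := by
    ext z
    constructor
    · rintro ⟨hzv, hzx⟩
      exact ⟨stereographic' n v z, fun h => hzx (injOn_stereographic' hzv hxv h),
        stereographic'_symm_stereographic' hzv⟩
    · rintro ⟨w, hw, rfl⟩
      refine ⟨stereographic'_symm_ne w, fun h => hw ?_⟩
      rw [mem_singleton_iff, ← mem_singleton_iff.1 h, stereographic'_stereographic'_symm]
  rw [himage]
  refine (isPathConnected_compl_singleton_of_one_lt_rank ?_ _).image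
    continuous_stereographic'_symm
  rw [← Module.finrank_eq_rank, finrank_euclideanSpace_fin]
  exact_mod_cast hn

theorem simplyConnectedSpace_sphere (hE : Module.finrank ℝ E = n + 1) (hn : 2 ≤ n) :
    SimplyConnectedSpace (sphere (0 : E) 1) := by
  have : Nontrivial E := Module.nontrivial_of_finrank_eq_succ hE
  obtain ⟨v⟩ : Nonempty (sphere (0 : E) 1) :=
    (NormedSpace.sphere_nonempty.2 zero_le_one).to_subtype
  have hv : -v ≠ v := (ne_neg_of_mem_unit_sphere ℝ v).symm
  refine simplyConnectedSpace_of_isOpen_union isOpen_compl_singleton isOpen_compl_singleton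
    (isSimplyConnected_compl_singleton hE) (isSimplyConnected_compl_singleton hE)
    (isPathConnected_compl_pair hE hn hv) ?_
  rw [← compl_inter, singleton_inter_eq_empty.2 (notMem_singleton_iff.2 hv.symm), compl_empty]

theorem locallyPathConnectedSpace_sphere (hE : Module.finrank ℝ E = n + 1) :
    LocallyPathConnectedSpace (sphere (0 : E) 1) :=
  have := Fact.mk hE
  ChartedSpace.locallyPathConnectedSpace (EuclideanSpace ℝ (Fin n)) _

end Sphere

section HomotopyExtension

universe u v

theorem exists_continuousMap_extending_homotopy {X : Type u} {F : Type v} [TopologicalSpace X]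
    [CompactSpace X] [T2Space X] [TopologicalSpace F] [TietzeExtension.{u, v} F] {M : Set X}
    (hM : IsClosed M) (H : C(M × I, F)) (g₁ : C(X, F)) (hHg₁ : ∀ x : M, H (x, 1) = g₁ x) :
    ∃ G : C(X × I, F), (∀ (x : M) t, G (x, t) = H (x, t)) ∧ ∀ x, G (x, 1) = g₁ x := by
  classical
  have hMI : IsClosed (M ×ˢ (univ : Set I)) := hM.prod isClosed_univ
  have htop : IsClosed ((univ : Set X) ×ˢ ({1} : Set I)) := isClosed_univ.prod isClosed_singleton
  set K : X × I → F := fun z => if h : z.1 ∈ M then H (⟨z.1, h⟩, z.2) else g₁ z.1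
  have hKM : ∀ (x : M) t, K (x, t) = H (x, t) := fun x t => dif_pos x.2
  have hK₁ : ∀ x, K (x, 1) = g₁ x := fun x => by
    by_cases hx : x ∈ M
    · rw [← hHg₁ ⟨x, hx⟩, ← hKM ⟨x, hx⟩]
    · exact dif_neg hx
  have hK : ContinuousOn K (M ×ˢ univ ∪ univ ×ˢ {1}) := by
    refine ContinuousOn.union_of_isClosed ?_ ?_ hMI htop
    · have : Continuous fun z : ↥(M ×ˢ (univ : Set I)) => H (⟨z.1.1, z.2.1⟩, z.1.2) := by fun_prop
      exact continuousOn_iff_continuous_domRestrict.2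
        (this.congr fun z => (hKM ⟨z.1.1, z.2.1⟩ z.1.2).symm)
    · refine (g₁.continuous.comp continuous_fst).continuousOn.congr ?_
      rintro ⟨x, t⟩ ⟨-, rfl⟩
      exact hK₁ x
  obtain ⟨G, hG⟩ := ContinuousMap.exists_restrict_eq (hMI.union htop) ⟨_, hK.domRestrict⟩
  have hGK : ∀ z ∈ M ×ˢ univ ∪ univ ×ˢ {1}, G z = K z := fun z hz =>
    DFunLike.congr_fun hG ⟨z, hz⟩
  exact ⟨G, fun x t => (hGK _ (.inl ⟨x.2, trivial⟩)).trans (hKM x t),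
    fun x => (hGK (x, 1) (.inr ⟨trivial, rfl⟩)).trans (hK₁ x)⟩

theorem exists_continuousMap_avoiding_of_homotopy {X : Type u} {F : Type v}
    [TopologicalSpace X] [CompactSpace X] [T2Space X] [TopologicalSpace F] [T1Space F]
    [TietzeExtension.{u, v} F] {c : F} {M : Set X} (hM : IsClosed M) (H : C(M × I, F))
    (hH : ∀ z, H z ≠ c) (g₁ : C(X, F)) (hg₁ : ∀ x, g₁ x ≠ c) (hHg₁ : ∀ x : M, H (x, 1) = g₁ x) :
    ∃ g : C(X, F), (∀ x, g x ≠ c) ∧ ∀ x : M, g x = H (x, 0) := by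
  obtain ⟨G, hGH, hGg₁⟩ := exists_continuousMap_extending_homotopy hM H g₁ hHg₁
  set N : Set X := Prod.fst '' (G ⁻¹' {c})
  have hN : IsClosed N :=
    isClosedMap_fst_of_compactSpace _ (isClosed_singleton.preimage G.continuous)
  have hMN : Disjoint M N := disjoint_right.2 <| by
    rintro _ ⟨⟨x, t⟩, hxt, rfl⟩ hx
    exact hH (⟨x, hx⟩, t) ((hGH ⟨x, hx⟩ t).symm.trans hxt)
  obtain ⟨u, hu0, hu1, hu⟩ := exists_continuous_zero_one_of_isClosed hM hN hMN
  refine ⟨⟨fun x => G (x, ⟨u x, hu x⟩), by fun_prop⟩, fun x hx => ?_, fun x => ?_⟩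
  · have hux : (⟨u x, hu x⟩ : I) = 1 := Subtype.ext (hu1 ⟨_, hx, rfl⟩)
    refine hg₁ x ?_
    rw [← hGg₁, ← hux]
    exact hx
  · have hux : (⟨u x, hu x⟩ : I) = 0 := Subtype.ext (hu0 x.2)
    change G (x, ⟨u x, hu x⟩) = _
    rw [hux, hGH]

variable {E : Type*} [NormedAddCommGroup E] [InnerProductSpace ℝ E] {n : ℕ}
  [Fact (Module.finrank ℝ E = n + 1)] {p q : sphere (0 : E) 1} {Q : Set (sphere (0 : E) 1)}

theorem exists_eq_zero_of_eqOn_frontier_stereographic' (hp : p ∈ Q) (hq : q ∉ closure Q)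
    {g : sphere (0 : E) 1 → EuclideanSpace ℝ (Fin n)} (hg : Continuous g)
    (hfr : ∀ x ∈ frontier Q, g x = stereographic' n q x - stereographic' n q p) :
    ∃ x, g x = 0 := by
  have hpq : p ≠ q := fun h => hq (h ▸ subset_closure hp)
  have : FiniteDimensional ℝ E := .of_fact_finrank_eq_succ n
  have : ProperSpace E := FiniteDimensional.proper_real E
  set B : Set (EuclideanSpace ℝ (Fin n)) := (stereographic' n q).symm ⁻¹' Q
  have hB : Bornology.IsBounded B := by
    have hcpt : IsCompact (stereographic' n q '' closure Q) :=
      isClosed_closure.isCompact.image_of_continuousOn <|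
        continuousOn_stereographic'.mono (subset_compl_singleton_iff.2 hq)
    exact hcpt.isBounded.subset fun z hz =>
      ⟨_, subset_closure hz, stereographic'_stereographic'_symm z⟩
  set f : EuclideanSpace ℝ (Fin n) → EuclideanSpace ℝ (Fin n) := fun z =>
    g ((stereographic' n q).symm z) + stereographic' n q p
  have hf : Continuous f := (hg.comp continuous_stereographic'_symm).add_const _
  have hfr' : EqOn f id (frontier B) := fun z hz => by
    change g _ + _ = z
    rw [hfr _ (continuous_stereographic'_symm.frontier_preimage_subset Q hz),
      stereographic'_stereographic'_symm, sub_add_cancel]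
  have hpB : stereographic' n q p ∈ B := by
    rwa [mem_preimage, stereographic'_symm_stereographic' hpq]
  obtain ⟨z, -, hz⟩ := subset_image_of_eqOn_frontier hB hf.continuousOn hfr' hpB
  exact ⟨_, add_eq_right.1 hz⟩

end HomotopyExtension

section BoundaryChart

theorem isOpen_range_of_continuous_of_injective {E X Y : Type*} [NormedAddCommGroup E]
    [InnerProductSpace ℝ E] [FiniteDimensional ℝ E] [TopologicalSpace X] [TopologicalSpace Y]
    [ChartedSpace E X] [ChartedSpace E Y] {f : X → Y} (hf : Continuous f)
    (hinj : Function.Injective f) : IsOpen (range f) := by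
  rw [isOpen_iff_mem_nhds]
  rintro _ ⟨x, rfl⟩
  set c := chartAt E x
  set d := chartAt E (f x)
  set W : Set E := c.target ∩ c.symm ⁻¹' (f ⁻¹' d.source)
  have hW : IsOpen W :=
    c.continuousOn_symm.isOpen_inter_preimage c.open_target (d.open_source.preimage hf)
  have hT : IsOpen ((d ∘ f ∘ c.symm) '' W) := by
    refine isOpen_image_of_continuousOn_of_injOn hW ?_ ?_
    · exact d.continuousOn.comp (hf.comp_continuousOn (c.continuousOn_symm.mono inter_subset_left))
        fun y hy => hy.2
    · intro y hy z hz h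
      exact c.symm.injOn hy.1 hz.1 (hinj (d.injOn hy.2 hz.2 h))
  have hTd : (d ∘ f ∘ c.symm) '' W ⊆ d.target := by
    rintro _ ⟨y, hy, rfl⟩
    exact d.map_source hy.2
  have hcx : c.symm (c x) = x := c.left_inv (mem_chart_source E x)
  have hmem : f x ∈ d.symm '' ((d ∘ f ∘ c.symm) '' W) := by
    refine ⟨d (f x), ⟨c x, ⟨mem_chart_target E x, ?_⟩, ?_⟩, d.left_inv (mem_chart_source E _)⟩
    · rw [mem_preimage, hcx]
      exact mem_chart_source E (f x)
    · rw [Function.comp_apply, Function.comp_apply, hcx]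
  refine mem_of_superset ((d.isOpen_image_symm_of_subset_target hT hTd).mem_nhds hmem) ?_
  rintro _ ⟨_, ⟨y, hy, rfl⟩, rfl⟩
  exact ⟨c.symm y, (d.left_inv hy.2).symm⟩

variable {n : ℕ} [NeZero n]

theorem coe_halfSpace_symm {y : EuclideanSpace ℝ (Fin n)} (hy : 0 ≤ y 0) :
    ((𝓡∂ n).symm y).1 = y :=
  (𝓡∂ n).right_inv (by rwa [range_modelWithCornersEuclideanHalfSpace])

theorem halfSpace_symm_coe (y : EuclideanHalfSpace n) : (𝓡∂ n).symm y.1 = y :=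
  (𝓡∂ n).left_inv y

theorem dense_halfSpace_pos : Dense {y : EuclideanHalfSpace n | 0 < y.1 0} := by
  intro y
  set γ : ℝ → EuclideanHalfSpace n := fun t => (𝓡∂ n).symm (y.1 + t • EuclideanSpace.single 0 1)
  have hγ : Continuous γ := (𝓡∂ n).continuous_symm.comp (by fun_prop)
  have hγ0 : γ 0 = y := by
    simp only [γ, zero_smul, add_zero, halfSpace_symm_coe]
  have hlim : Tendsto γ (𝓝[>] 0) (𝓝 y) := by
    simpa only [hγ0] using (hγ.tendsto 0).mono_left nhdsWithin_le_nhds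
  refine mem_closure_of_tendsto hlim ?_
  filter_upwards [self_mem_nhdsWithin] with t ht
  have hpos : 0 < (y.1 + t • EuclideanSpace.single 0 1 : EuclideanSpace ℝ (Fin n)) 0 := by
    simpa using add_pos_of_nonneg_of_pos y.2 ht
  simpa only [mem_ofPred_eq, γ, coe_halfSpace_symm hpos.le] using hpos

variable {X : Type*} [TopologicalSpace X] [ChartedSpace (EuclideanSpace ℝ (Fin n)) X] {A : Set X}
  {e : OpenPartialHomeomorph A (EuclideanHalfSpace n)} {a : A}

theorem mem_interior_of_chart_pos (ha : a ∈ e.source) (hpos : 0 < (e a).1 0) :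
    (a : X) ∈ interior A := by
  let U : TopologicalSpace.Opens (EuclideanSpace ℝ (Fin n)) :=
    ⟨{y | 0 < y 0} ∩ (𝓡∂ n).symm ⁻¹' e.target,
      (isOpen_lt continuous_const (by fun_prop)).inter
        (e.open_target.preimage (𝓡∂ n).continuous_symm)⟩
  set f : U → X := fun y => e.symm ((𝓡∂ n).symm y.1)
  have hf : Continuous f := continuous_subtype_val.comp <| e.continuousOn_symm.comp_continuous
    ((𝓡∂ n).continuous_symm.comp continuous_subtype_val) fun y => y.2.2
  have hinj : Function.Injective f := fun y z h => by
    have heq := congrArg Subtype.val (e.symm.injOn y.2.2 z.2.2 (Subtype.ext h))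
    rw [coe_halfSpace_symm y.2.1.le, coe_halfSpace_symm z.2.1.le] at heq
    exact Subtype.ext heq
  have hopen := isOpen_range_of_continuous_of_injective (E := EuclideanSpace ℝ (Fin n)) hf hinj
  refine interior_maximal ?_ hopen ⟨⟨(e a).1, hpos, ?_⟩, ?_⟩
  · rintro _ ⟨y, rfl⟩
    exact (e.symm _).2
  · rw [mem_preimage, halfSpace_symm_coe]
    exact e.map_source ha
  · simp only [f, halfSpace_symm_coe, e.left_inv ha]

theorem chart_pos_of_mem_interior (ha : a ∈ e.source) (hint : (a : X) ∈ interior A) :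
    0 < (e a).1 0 := by
  obtain ⟨O, hO, hOe⟩ := isOpen_induced_iff.1 e.open_source
  let U : TopologicalSpace.Opens X := ⟨interior A ∩ O, isOpen_interior.inter hO⟩
  let ι : U → A := fun x => ⟨x.1, interior_subset x.2.1⟩
  have hι : ∀ x, ι x ∈ e.source := fun x => hOe.subset x.2.2
  set f : U → EuclideanSpace ℝ (Fin n) := fun x => (e (ι x)).1
  have hf : Continuous f := continuous_subtype_val.comp <|
    e.continuousOn.comp_continuous (continuous_subtype_val.subtype_mk _) hι
  have hinj : Function.Injective f := fun x y h => by
    have heq : ι x = ι y := e.injOn (hι x) (hι y) (Subtype.ext h)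
    have hval : (ι x).1 = (ι y).1 := congrArg Subtype.val heq
    exact Subtype.ext hval
  have hopen := isOpen_range_of_continuous_of_injective (E := EuclideanSpace ℝ (Fin n)) hf hinj
  have hmem : (e a).1 ∈ interior (range (𝓡∂ n)) :=
    interior_maximal (by rintro _ ⟨x, rfl⟩; exact ⟨e (ι x), rfl⟩) hopen
      ⟨⟨a, hint, hOe.symm.subset ha⟩, rfl⟩
  rwa [interior_range_modelWithCornersEuclideanHalfSpace] at hmem

theorem mem_frontier_iff_chart_eq_zero (ha : a ∈ e.source) :
    (a : X) ∈ frontier A ↔ (e a).1 0 = 0 := by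
  have hint : (a : X) ∈ interior A ↔ 0 < (e a).1 0 :=
    ⟨chart_pos_of_mem_interior ha, mem_interior_of_chart_pos ha⟩
  rw [frontier, Set.mem_sdiff, hint, not_lt, (e a).2.ge_iff_eq']
  exact and_iff_right (subset_closure a.2)

theorem exists_chart_target_eq_preimage_ball {Y : Type*} [TopologicalSpace Y]
    [ChartedSpace (EuclideanHalfSpace n) Y] (y : Y) :
    ∃ (e : OpenPartialHomeomorph Y (EuclideanHalfSpace n)) (r : ℝ), 0 < r ∧ y ∈ e.source ∧
      e.target = Subtype.val ⁻¹' ball (e y).1 r := by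
  set c := chartAt (EuclideanHalfSpace n) y
  have hy : y ∈ c.source := mem_chart_source _ y
  obtain ⟨V, hV, hVc⟩ := isOpen_induced_iff.1 c.open_target
  obtain ⟨r, hr, hrV⟩ := Metric.isOpen_iff.1 hV (c y).1 (hVc.symm.subset (c.map_source hy))
  have hball : IsOpen (Subtype.val ⁻¹' ball (c y).1 r : Set (EuclideanHalfSpace n)) :=
    isOpen_ball.preimage continuous_subtype_val
  refine ⟨(c.symm.restrOpen _ hball).symm, r, hr, ?_, ?_⟩
  · exact (mem_inter_iff _ _ _).2 ⟨hy, mem_ball_self hr⟩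
  · exact inter_eq_right.2 ((preimage_mono hrV).trans hVc.subset)

theorem isPreconnected_chart_preimage {Y : Type*} [TopologicalSpace Y]
    {e : OpenPartialHomeomorph Y (EuclideanHalfSpace n)} {C D : Set (EuclideanSpace ℝ (Fin n))}
    (he : e.target = Subtype.val ⁻¹' D) (hD : Convex ℝ D) (hC : Convex ℝ C) :
    IsPreconnected (e.source ∩ e ⁻¹' (Subtype.val ⁻¹' C)) := by
  have himage : e.symm '' (e.target ∩ Subtype.val ⁻¹' C) = e.source ∩ e ⁻¹' (Subtype.val ⁻¹' C) :=
    e.symm.image_source_inter_eq' _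
  rw [← himage]
  refine IsPreconnected.image ?_ _ (e.continuousOn_symm.mono inter_subset_left)
  have hconv : Convex ℝ ((𝓡∂ n) '' ((𝓡∂ n) ⁻¹' (D ∩ C))) := by
    rw [image_preimage_eq_range_inter, range_modelWithCornersEuclideanHalfSpace]
    exact EuclideanHalfSpace.convex.inter (hD.inter hC)
  rw [he]
  exact (𝓡∂ n).isClosedEmbedding.isInducing.isPreconnected_image.1 hconv.isPreconnected

theorem connectedComponentIn_frontier_mem_nhdsWithin [ChartedSpace (EuclideanHalfSpace n) A]
    (hA : IsClosed A) {x : X} (hx : x ∈ frontier A) :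
    connectedComponentIn (frontier A) x ∈ 𝓝[frontier A] x := by
  obtain ⟨e, r, -, hxe, he⟩ :=
    exists_chart_target_eq_preimage_ball (n := n) (⟨x, hA.frontier_subset hx⟩ : A)
  obtain ⟨O, hO, hOe⟩ := isOpen_induced_iff.1 e.open_source
  set T : Set A := e.source ∩ e ⁻¹' (Subtype.val ⁻¹' {y | y 0 = 0})
  have hTpre : IsPreconnected (Subtype.val '' T : Set X) := by
    have hplane : Convex ℝ {y : EuclideanSpace ℝ (Fin n) | y 0 = 0} :=
      convex_hyperplane (EuclideanSpace.proj 0).isLinear 0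
    exact (isPreconnected_chart_preimage he (convex_ball _ _) hplane).image _
      continuous_subtype_val.continuousOn
  have hTfr : Subtype.val '' T ⊆ frontier A := by
    rintro _ ⟨a, ⟨hae, ha0⟩, rfl⟩
    exact (mem_frontier_iff_chart_eq_zero hae).2 ha0
  have hfrT : frontier A ∩ O ⊆ Subtype.val '' T := fun y ⟨hy, hyO⟩ => by
    have hye : (⟨y, hA.frontier_subset hy⟩ : A) ∈ e.source := hOe.subset hyO
    exact ⟨_, ⟨hye, (mem_frontier_iff_chart_eq_zero hye).1 hy⟩, rfl⟩
  have hxO : x ∈ O := hOe.symm.subset hxe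
  refine mem_nhdsWithin.2 ⟨O, hO, hxO, ?_⟩
  rw [inter_comm]
  exact hfrT.trans (hTpre.subset_connectedComponentIn (hfrT ⟨hx, hxO⟩) hTfr)

theorem exists_isPreconnected_mem_nhdsWithin_interior [ChartedSpace (EuclideanHalfSpace n) A]
    {x : X} (hx : x ∈ A) :
    ∃ S ⊆ interior A, IsPreconnected S ∧ S ∈ 𝓝[interior A] x := by
  obtain ⟨e, r, -, hxe, he⟩ := exists_chart_target_eq_preimage_ball (n := n) (⟨x, hx⟩ : A)
  obtain ⟨O, hO, hOe⟩ := isOpen_induced_iff.1 e.open_source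
  have hhalf : Convex ℝ {y : EuclideanSpace ℝ (Fin n) | 0 < y 0} :=
    convex_halfSpace_gt (EuclideanSpace.proj 0).isLinear 0
  refine ⟨_, ?_, (isPreconnected_chart_preimage he (convex_ball _ _) hhalf).image _
      continuous_subtype_val.continuousOn, mem_nhdsWithin.2 ⟨O, hO, hOe.symm.subset hxe, ?_⟩⟩
  · rintro _ ⟨a, ⟨hae, hpos⟩, rfl⟩
    exact mem_interior_of_chart_pos hae hpos
  · rintro y ⟨hyO, hy⟩
    have hye : (⟨y, interior_subset hy⟩ : A) ∈ e.source := hOe.subset hyO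
    exact ⟨_, ⟨hye, chart_pos_of_mem_interior hye hy⟩, rfl⟩

theorem subset_closure_interior [ChartedSpace (EuclideanHalfSpace n) A] :
    A ⊆ closure (interior A) := fun x hx => by
  set e := chartAt (EuclideanHalfSpace n) (⟨x, hx⟩ : A)
  rw [_root_.mem_closure_iff]
  intro O hO hxO
  have hopen : IsOpen (e '' (e.source ∩ Subtype.val ⁻¹' O)) :=
    e.isOpen_image_source_inter (hO.preimage continuous_subtype_val)
  obtain ⟨_, ⟨a, ⟨hae, haO⟩, rfl⟩, hpos⟩ :=
    dense_halfSpace_pos.inter_open_nonempty _ hopen ⟨_, _, ⟨mem_chart_source _ _, hxO⟩, rfl⟩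
  exact ⟨a, haO, mem_interior_of_chart_pos hae hpos⟩

end BoundaryChart

section Push

theorem exists_homotopy_of_isCompact_support {X Y : Type*} [TopologicalSpace X] [T2Space X]
    [TopologicalSpace Y] (e : OpenPartialHomeomorph X Y) (P : C(Y × I, Y)) {K : Set Y}
    (hK : IsCompact K) (hKe : K ⊆ e.target) (hP : ∀ y ∈ e.target, ∀ t, P (y, t) ∈ e.target)
    (hPK : ∀ y ∉ K, ∀ t, P (y, t) = y) :
    ∃ Φ : C(X × I, X), (∀ x ∈ e.source, ∀ t, Φ (x, t) = e.symm (P (e x, t))) ∧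
      ∀ x ∉ e.source, ∀ t, Φ (x, t) = x := by
  classical
  set φ : X × I → X := fun z => if z.1 ∈ e.source then e.symm (P (e z.1, z.2)) else z.1
  have hφ : ∀ x ∈ e.source, ∀ t, φ (x, t) = e.symm (P (e x, t)) := fun x hx t => if_pos hx
  have hφ' : ∀ x ∉ e.source, ∀ t, φ (x, t) = x := fun x hx t => if_neg hx
  have hin : ContinuousOn φ (e.source ×ˢ univ) := by
    have hcont : ContinuousOn (fun z : X × I => e.symm (P (e z.1, z.2))) (e.source ×ˢ univ) := by
      refine e.continuousOn_symm.comp (P.continuous.comp_continuousOn ?_)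
        fun z hz => hP _ (e.map_source hz.1) _
      exact (e.continuousOn.comp continuousOn_fst fun z hz => hz.1).prodMk continuousOn_snd
    exact hcont.congr fun z hz => hφ z.1 hz.1 z.2
  have hout : ContinuousOn φ ((e.symm '' K)ᶜ ×ˢ univ) := by
    refine continuousOn_fst.congr fun z hz => ?_
    by_cases hze : z.1 ∈ e.source
    · have hzK : e z.1 ∉ K := fun h => hz.1 ⟨_, h, e.left_inv hze⟩
      rw [hφ z.1 hze, hPK _ hzK, e.left_inv hze]
    · exact hφ' z.1 hze z.2
  have hKc : IsClosed (e.symm '' K) :=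
    (hK.image_of_continuousOn (e.continuousOn_symm.mono hKe)).isClosed
  have hKs : e.symm '' K ⊆ e.source := by
    rintro _ ⟨y, hy, rfl⟩
    exact e.map_target (hKe hy)
  have hcont : Continuous φ := by
    rw [← continuousOn_univ]
    refine (hin.union_of_isOpen hout (e.open_source.prod isOpen_univ)
      (hKc.isOpen_compl.prod isOpen_univ)).mono fun z _ => ?_
    by_cases hz : z.1 ∈ e.symm '' K
    · exact .inl ⟨hKs hz, trivial⟩
    · exact .inr ⟨hz, trivial⟩
  exact ⟨⟨φ, hcont⟩, hφ, hφ'⟩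

variable {n : ℕ} [NeZero n]

theorem exists_homotopy_halfSpace_ne (y₀ : EuclideanHalfSpace n) {ρ : ℝ} (hρ : 0 < ρ) :
    ∃ P : C(EuclideanHalfSpace n × I, EuclideanHalfSpace n), (∀ y, P (y, 0) = y) ∧
      (∀ y t, ρ ≤ dist y.1 y₀.1 → P (y, t) = y) ∧
      (∀ y t, dist y.1 y₀.1 ≤ ρ → dist (P (y, t)).1 y₀.1 ≤ ρ) ∧
      ∀ y, y.1 0 = y₀.1 0 → P (y, 1) ≠ y₀ := by
  set η : EuclideanHalfSpace n → ℝ := fun y => max 0 (ρ - dist y.1 y₀.1)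
  have hη : ∀ y, 0 ≤ η y := fun y => le_max_left _ _
  have hηc : Continuous η := by
    have := continuous_subtype_val (p := fun y : EuclideanSpace ℝ (Fin n) => 0 ≤ y 0)
    fun_prop
  set q : EuclideanHalfSpace n × I → EuclideanSpace ℝ (Fin n) := fun z =>
    z.1.1 + (z.2 * η z.1) • EuclideanSpace.single 0 1
  have hq : ∀ z, q z 0 = z.1.1 0 + z.2 * η z.1 := fun z => by simp [q]
  have hq0 : ∀ z, 0 ≤ q z 0 := fun z => by
    rw [hq]
    exact add_nonneg z.1.2 (mul_nonneg z.2.2.1 (hη _))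
  have hqc : Continuous q := by
    have := continuous_subtype_val (p := fun y : EuclideanSpace ℝ (Fin n) => 0 ≤ y 0)
    fun_prop
  refine ⟨⟨fun z => ⟨q z, hq0 z⟩, hqc.subtype_mk _⟩, fun y => ?_, fun y t hy => ?_,
    fun y t hy => ?_, fun y hy h => ?_⟩
  · exact Subtype.ext (by simp [q])
  · have : η y = 0 := max_eq_left (sub_nonpos.2 hy)
    exact Subtype.ext (by simp [q, this])
  · have hηy : η y = ρ - dist y.1 y₀.1 := max_eq_right (sub_nonneg.2 hy)
    calc
      dist (q (y, t)) y₀.1 ≤ dist (q (y, t)) y.1 + dist y.1 y₀.1 := dist_triangle _ _ _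
      _ = t * η y + dist y.1 y₀.1 := by
        simp [q, norm_smul, abs_of_nonneg t.2.1, abs_of_nonneg (hη y)]
      _ ≤ 1 * η y + dist y.1 y₀.1 := by
        gcongr
        exact t.2.2
      _ = ρ := by rw [hηy]; ring
  · have hqy : q (y, 1) = y₀.1 := congrArg Subtype.val h
    have hηy : η y = 0 := by
      have := hq (y, 1)
      rw [hqy] at this
      simpa [hy] using this
    have hy₀ : y.1 = y₀.1 := by simpa [q, hηy] using hqy
    simp only [η, hy₀, dist_self, sub_zero, max_eq_right hρ.le] at hηy
    exact hρ.ne' hηy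

theorem exists_homotopy_frontier_ne {X : Type*} [TopologicalSpace X] [T2Space X]
    [ChartedSpace (EuclideanSpace ℝ (Fin n)) X] {A : Set X}
    [ChartedSpace (EuclideanHalfSpace n) A] {a₀ : A} (ha₀ : (a₀ : X) ∈ frontier A) :
    ∃ Φ : C(A × I, A), (∀ a, Φ (a, 0) = a) ∧ ∀ a : A, (a : X) ∈ frontier A → Φ (a, 1) ≠ a₀ := by
  obtain ⟨e, r, hr, hae, he⟩ := exists_chart_target_eq_preimage_ball (n := n) a₀
  obtain ⟨P, hP0, hPout, hPin, hPne⟩ := exists_homotopy_halfSpace_ne (e a₀) (half_pos hr)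
  have hK : IsCompact (Subtype.val ⁻¹' closedBall (e a₀).1 (r / 2) :
      Set (EuclideanHalfSpace n)) :=
    (𝓡∂ n).isClosedEmbedding.isCompact_preimage (isCompact_closedBall _ _)
  have hKe : Subtype.val ⁻¹' closedBall (e a₀).1 (r / 2) ⊆ e.target :=
    he ▸ preimage_mono (closedBall_subset_ball (half_lt_self hr))
  have hPK : ∀ y ∉ Subtype.val ⁻¹' closedBall (e a₀).1 (r / 2), ∀ t, P (y, t) = y :=
    fun y hy t => hPout y t (not_le.1 hy).le
  have hPe : ∀ y ∈ e.target, ∀ t, P (y, t) ∈ e.target := fun y hy t => by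
    by_cases hyK : y ∈ Subtype.val ⁻¹' closedBall (e a₀).1 (r / 2)
    · exact hKe (hPin y t hyK)
    · rwa [hPK y hyK]
  obtain ⟨Φ, hΦin, hΦout⟩ := exists_homotopy_of_isCompact_support e P hK hKe hPe hPK
  refine ⟨Φ, fun a => ?_, fun a ha h => ?_⟩
  · by_cases hae' : a ∈ e.source
    · rw [hΦin a hae', hP0, e.left_inv hae']
    · exact hΦout a hae' 0
  · by_cases hae' : a ∈ e.source
    · refine hPne (e a) ?_ ?_
      · rw [(mem_frontier_iff_chart_eq_zero hae').1 ha, (mem_frontier_iff_chart_eq_zero hae).1 ha₀]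
      · rw [← h, hΦin a hae', e.right_inv (hPe _ (e.map_source hae') 1)]
    · exact hae' ((hΦout a hae' 1).symm.trans h ▸ hae)

end Push

section ConnectedComponentIn

variable {X : Type*} [TopologicalSpace X]

theorem isClosed_connectedComponentIn {F : Set X} (hF : IsClosed F) (x : X) :
    IsClosed (connectedComponentIn F x) := by
  by_cases hx : x ∈ F
  · refine isClosed_of_closure_subset ?_
    exact isPreconnected_connectedComponentIn.closure.subset_connectedComponentIn
      (subset_closure (mem_connectedComponentIn hx))
      (closure_minimal (connectedComponentIn_subset F x) hF)
  · rw [connectedComponentIn_eq_empty hx]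
    exact isClosed_empty

theorem isClosed_diff_connectedComponentIn {F : Set X} (hF : IsClosed F)
    (h : ∀ x ∈ F, connectedComponentIn F x ∈ 𝓝[F] x) (x : X) :
    IsClosed (F \ connectedComponentIn F x) := by
  refine isClosed_of_closure_subset fun y hy => ⟨hF.closure_subset (closure_mono sdiff_subset hy),
    fun hyx => ?_⟩
  have hyF : y ∈ F := connectedComponentIn_subset F x hyx
  have hmem : {z | z ∈ F → z ∈ connectedComponentIn F x} ∈ 𝓝 y :=
    mem_inf_principal.1 (connectedComponentIn_eq hyx ▸ h y hyF)
  obtain ⟨z, hz, hzF, hzx⟩ := mem_closure_iff_nhds.1 hy _ hmem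
  exact hzx (hz hzF)

variable [LocallyConnectedSpace X] {U : Set X}

theorem frontier_connectedComponentIn_subset (hU : IsOpen U) (p : X) :
    frontier (connectedComponentIn U p) ⊆ frontier U := by
  rw [hU.connectedComponentIn.frontier_eq, hU.frontier_eq]
  rintro x ⟨hx, hxp⟩
  refine ⟨closure_mono (connectedComponentIn_subset U p) hx, fun hxU => hxp ?_⟩
  obtain ⟨y, hyx, hyp⟩ := _root_.mem_closure_iff.1 hx _ (hU.connectedComponentIn (x := x))
    (mem_connectedComponentIn hxU)
  rw [connectedComponentIn_eq hyp, ← connectedComponentIn_eq hyx]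
  exact mem_connectedComponentIn hxU

theorem frontier_subset_interior_compl_union_connectedComponentIn [PreconnectedSpace X]
    (hU : IsOpen U) (hfr : IsPreconnected (frontier U))
    (hloc : ∀ x ∈ frontier U, ∃ S ⊆ U, IsPreconnected S ∧ S ∈ 𝓝[U] x) {p : X} (hp : p ∈ U)
    (hne : connectedComponentIn U p ≠ univ) :
    frontier U ⊆ interior (Uᶜ ∪ connectedComponentIn U p) := by
  set Q := connectedComponentIn U p
  have hQ : (frontier Q).Nonempty :=
    nonempty_frontier_iff.2 ⟨⟨p, mem_connectedComponentIn hp⟩, hne⟩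
  have hcover : frontier U ⊆ interior (Uᶜ ∪ Q) ∪ (closure Q)ᶜ := fun x hx => by
    obtain ⟨S, hSU, hS, hSx⟩ := hloc x hx
    rw [mem_nhdsWithin_iff_exists_mem_nhds_inter] at hSx
    obtain ⟨N, hN, hNS⟩ := hSx
    by_cases hdisj : (S ∩ Q).Nonempty
    · obtain ⟨y, hyS, hyQ⟩ := hdisj
      refine .inl (mem_interior_iff_mem_nhds.2 (mem_of_superset hN fun z hz => ?_))
      refine or_iff_not_imp_left.2 fun hzU => ?_
      have hSQ : S ⊆ Q :=
        (hS.subset_connectedComponentIn hyS hSU).trans (connectedComponentIn_eq hyQ).ge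
      exact hSQ (hNS ⟨hz, not_not.1 hzU⟩)
    · refine .inr fun hxQ => hdisj ?_
      obtain ⟨y, hyN, hyQ⟩ := mem_closure_iff_nhds.1 hxQ N hN
      exact ⟨y, hNS ⟨hyN, connectedComponentIn_subset U p hyQ⟩, hyQ⟩
  have hdisj : frontier U ∩ (interior (Uᶜ ∪ Q) ∩ (closure Q)ᶜ) = ∅ := by
    refine eq_empty_of_forall_notMem fun x ⟨hx, hxQ, hxQ'⟩ => ?_
    obtain ⟨y, ⟨hyQ, hyQ'⟩, hyU⟩ := _root_.mem_closure_iff.1 (frontier_subset_closure hx) _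
      (isOpen_interior.inter isClosed_closure.isOpen_compl) ⟨hxQ, hxQ'⟩
    exact hyQ' (subset_closure ((interior_subset hyQ).resolve_left (not_not.2 hyU)))
  refine (isPreconnected_iff_subset_of_disjoint.1 hfr _ _ isOpen_interior
    isClosed_closure.isOpen_compl hcover hdisj).resolve_right fun h => ?_
  obtain ⟨x, hx⟩ := hQ
  exact h (frontier_connectedComponentIn_subset hU p hx) (frontier_subset_closure hx)

theorem isPreconnected_of_isPreconnected_frontier [PreconnectedSpace X] (hU : IsOpen U)
    (hfr : IsPreconnected (frontier U)) (hne : (frontier U).Nonempty)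
    (hloc : ∀ x ∈ frontier U, ∃ S ⊆ U, IsPreconnected S ∧ S ∈ 𝓝[U] x) : IsPreconnected U := by
  obtain ⟨x, hx⟩ := hne
  have hxU : x ∉ U := hU.frontier_eq.subset hx |>.2
  have hmem : ∀ p ∈ U, x ∈ interior (Uᶜ ∪ connectedComponentIn U p) := fun p hp => by
    refine frontier_subset_interior_compl_union_connectedComponentIn hU hfr hloc hp (fun h => ?_) hx
    exact hxU (connectedComponentIn_subset U p (h ▸ mem_univ x))
  refine isPreconnected_of_forall_pair fun p hp q hq =>
    ⟨_, connectedComponentIn_subset U p, mem_connectedComponentIn hp, ?_,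
      isPreconnected_connectedComponentIn⟩
  obtain ⟨y, ⟨hyp, hyq⟩, hyU⟩ := _root_.mem_closure_iff.1 (frontier_subset_closure hx) _
    (isOpen_interior.inter isOpen_interior) ⟨hmem p hp, hmem q hq⟩
  have hyp' := (interior_subset hyp).resolve_left (not_not.2 hyU)
  have hyq' := (interior_subset hyq).resolve_left (not_not.2 hyU)
  rw [connectedComponentIn_eq hyp', ← connectedComponentIn_eq hyq']
  exact mem_connectedComponentIn hq

end ConnectedComponentIn

section Components

variable {X : Type*} [TopologicalSpace X] {U V : Set X}

theorem connectedComponentIn_union_eq_left (hU : IsOpen U) (hV : IsOpen V) (hUV : Disjoint U V)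
    (hUc : IsPreconnected U) {x : X} (hx : x ∈ U) : connectedComponentIn (U ∪ V) x = U := by
  have hxUV : x ∈ connectedComponentIn (U ∪ V) x := mem_connectedComponentIn (.inl hx)
  refine Subset.antisymm ?_ (hUc.subset_connectedComponentIn hx subset_union_left)
  exact isPreconnected_connectedComponentIn.subset_left_of_subset_union hU hV hUV
    (connectedComponentIn_subset _ x) ⟨x, hxUV, hx⟩

theorem card_connectedComponents_union_eq_two (hU : IsOpen U) (hV : IsOpen V) (hUV : Disjoint U V)
    (hUc : IsConnected U) (hVc : IsConnected V) :
    Nat.card (ConnectedComponents ↥(U ∪ V)) = 2 := by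
  have hmk : ∀ a b : ↥(U ∪ V), (a : ConnectedComponents ↥(U ∪ V)) = b ↔
      connectedComponentIn (U ∪ V) a.1 = connectedComponentIn (U ∪ V) b.1 := fun a b => by
    rw [ConnectedComponents.coe_eq_coe, connectedComponentIn_eq_image a.2,
      connectedComponentIn_eq_image b.2, Subtype.val_injective.image_injective.eq_iff]
  have hcompU : ∀ x ∈ U, connectedComponentIn (U ∪ V) x = U := fun x hx =>
    connectedComponentIn_union_eq_left hU hV hUV hUc.isPreconnected hx
  have hcompV : ∀ x ∈ V, connectedComponentIn (U ∪ V) x = V := fun x hx =>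
    union_comm U V ▸ connectedComponentIn_union_eq_left hV hU hUV.symm hVc.isPreconnected hx
  obtain ⟨u, hu⟩ := hUc.nonempty
  obtain ⟨v, hv⟩ := hVc.nonempty
  rw [Nat.card_eq_two_iff]
  refine ⟨(⟨u, .inl hu⟩ : ↥(U ∪ V)), (⟨v, .inr hv⟩ : ↥(U ∪ V)), fun h => ?_, ?_⟩
  · have hUV' : U = V := by
      rw [← hcompU u hu, (hmk _ _).1 h, hcompV v hv]
    exact disjoint_left.1 hUV hu (hUV' ▸ hu)
  · refine eq_univ_of_forall fun c => ?_
    obtain ⟨⟨y, hy⟩, rfl⟩ := ConnectedComponents.surjective_coe c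
    rcases hy with hy | hy
    · exact .inl ((hmk _ _).2 (by rw [hcompU y hy, hcompU u hu]))
    · exact .inr ((hmk _ _).2 (by rw [hcompV y hy, hcompV v hv]))

end Components

section Lift

variable {X : Type*} [TopologicalSpace X]

theorem exists_eqOn_forall_notMem_int [SimplyConnectedSpace X] [LocallyPathConnectedSpace X]
    {A : Set X} (hA : IsClosed A) (hAc : IsPreconnected A) (hAne : A.Nonempty) {h : X → ℝ}
    (hc : ContinuousOn h A) (hfr : ∀ x ∈ frontier A, ∃ k : ℤ, h x = k) :
    ∃ F : C(X, ℝ), EqOn F h A ∧ ∀ x ∉ A, ∃ k : ℤ, F x = k := by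
  classical
  obtain ⟨a, ha⟩ := hAne
  set f : X → AddCircle (1 : ℝ) := A.piecewise (fun x => (h x : AddCircle (1 : ℝ))) 0
  have hint : ∀ r : ℝ, (r : AddCircle (1 : ℝ)) = 0 → ∃ k : ℤ, r = k := fun r hr => by
    obtain ⟨k, hk⟩ := (AddCircle.coe_eq_zero_iff (1 : ℝ)).1 hr
    exact ⟨k, by simpa using hk.symm⟩
  have hf : Continuous f := by
    refine continuous_piecewise (fun x hx => ?_) ?_ continuousOn_const
    · obtain ⟨k, hk⟩ := hfr x hx
      exact (AddCircle.coe_eq_zero_iff (1 : ℝ)).2 ⟨k, by simp [hk]⟩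
    · exact (AddCircle.continuous_mk' 1).comp_continuousOn (hA.closure_eq.symm ▸ hc)
  have hfA : ∀ x ∈ A, f x = (h x : AddCircle (1 : ℝ)) := fun x hx => piecewise_eq_of_mem _ _ _ hx
  obtain ⟨F, ⟨hFa, hF⟩, -⟩ := (AddCircle.isCoveringMap_coe (1 : ℝ)).existsUnique_continuousMap_lifts
    ⟨f, hf⟩ a (h a) (hfA a ha).symm
  have hFf : ∀ x, (F x : AddCircle (1 : ℝ)) = f x := congrFun hF
  have hdiff : MapsTo (fun x => F x - h x) A (range ((↑) : ℤ → ℝ)) := fun x hx => by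
    obtain ⟨k, hk⟩ := hint (F x - h x) (by rw [AddCircle.coe_sub, hFf, hfA x hx, sub_self])
    exact ⟨k, hk.symm⟩
  have : DiscreteTopology (range ((↑) : ℤ → ℝ)) :=
    Int.isClosedEmbedding_coe_real.isEmbedding.toHomeomorph.symm.isEmbedding.discreteTopology
  refine ⟨F, fun x hx => ?_, fun x hx => hint _ ?_⟩
  · have hconst := hAc.constant_of_mapsTo ⟨this⟩ (F.continuous.continuousOn.sub hc) hdiff hx ha
    rwa [Pi.sub_apply, Pi.sub_apply, hFa, sub_self, sub_eq_zero] at hconst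
  · rw [hFf]
    exact piecewise_eq_of_notMem _ _ _ hx

end Lift

section Splitting

/-- A splitting of the complement of a part `M` of the frontier of `A` into two open sides: the
inner side `U` contains the interior of `A`, and the outer side `V` fills up the exterior of `A`
near `M`. -/
structure FrontierSplitting {X : Type*} [TopologicalSpace X] (A M U V : Set X) : Prop where
  isOpen_inner : IsOpen U
  isOpen_outer : IsOpen V
  disjoint : Disjoint U V
  union_eq : U ∪ V = Mᶜ
  interior_subset_inner : interior A ⊆ U
  union_outer_mem_nhds : ∀ x ∈ M, A ∪ V ∈ 𝓝 x

variable {X : Type*} [TopologicalSpace X] {A M U V : Set X}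

theorem exists_frontierSplitting [NormalSpace X] [SimplyConnectedSpace X]
    [LocallyPathConnectedSpace X] (hA : IsClosed A) (hAc : IsPreconnected A) (hAne : A.Nonempty)
    (hM : IsClosed M) (hMA : M ⊆ frontier A) (hM' : IsClosed (frontier A \ M)) :
    ∃ U V, FrontierSplitting A M U V := by
  obtain ⟨h, h0, h1, -⟩ := exists_continuous_zero_one_of_isClosed hM hM' disjoint_sdiff_right
  have hfr : ∀ x ∈ frontier A, ∃ k : ℤ, h x = k := fun x hx => by
    by_cases hxM : x ∈ M
    · exact ⟨0, by simpa using h0 hxM⟩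
    · exact ⟨1, by simpa using h1 ⟨hx, hxM⟩⟩
  obtain ⟨F, hFA, hFint⟩ :=
    exists_eqOn_forall_notMem_int hA hAc hAne h.continuous.continuousOn hfr
  have hF0 : ∀ x ∈ M, F x = 0 := fun x hx => (hFA (hA.frontier_subset (hMA hx))).trans (h0 hx)
  have hF1 : ∀ x ∈ frontier A, x ∉ M → F x = 1 := fun x hx hxM =>
    (hFA (hA.frontier_subset hx)).trans (h1 ⟨hx, hxM⟩)
  have hhalf : ∀ x ∉ A, F x ≠ 1 / 2 := fun x hx hF => by
    obtain ⟨k, hk⟩ := hFint x hx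
    have : (2 * k : ℤ) = 1 := by exact_mod_cast (by linarith : (2 * k : ℝ) = 1)
    omega
  have hlt : IsOpen {x | F x < 1 / 2} := isOpen_lt F.continuous continuous_const
  have hgt : IsOpen {x | 1 / 2 < F x} := isOpen_lt continuous_const F.continuous
  refine ⟨interior A ∪ {x | 1 / 2 < F x}, Aᶜ ∩ {x | F x < 1 / 2}, isOpen_interior.union hgt,
    hA.isOpen_compl.inter hlt, ?_, ?_, subset_union_left, fun x hx => ?_⟩
  · refine disjoint_left.2 ?_
    rintro x (hx | hx) ⟨hxA, hx'⟩
    · exact hxA (interior_subset hx)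
    · exact lt_asymm (show 1 / 2 < F x from hx) hx'
  · ext x
    refine ⟨?_, fun hxM => ?_⟩
    · rintro ((hx | hx) | hx) hxM
      · exact (hMA hxM).2 hx
      · norm_num [hF0 x hxM] at hx
      · exact hx.1 (hA.frontier_subset (hMA hxM))
    · by_cases hxA : x ∈ A
      · by_cases hxi : x ∈ interior A
        · exact .inl (.inl hxi)
        · have hx1 : F x = 1 := hF1 x ⟨subset_closure hxA, hxi⟩ hxM
          exact .inl (.inr (by norm_num [hx1]))
      · exact (hhalf x hxA).lt_or_gt.elim (fun h => .inr ⟨hxA, h⟩) fun h => .inl (.inr h)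
  · filter_upwards [hlt.mem_nhds (by norm_num [hF0 x hx])] with y hy
    exact or_iff_not_imp_left.2 fun hyA => ⟨hyA, hy⟩

namespace FrontierSplitting

theorem disjoint_outer (h : FrontierSplitting A M U V) (hAi : A ⊆ closure (interior A)) :
    Disjoint A V :=
  (h.disjoint.mono_left h.interior_subset_inner).closure_left h.isOpen_outer |>.mono_left hAi

theorem frontier_outer (h : FrontierSplitting A M U V) (hMA : M ⊆ frontier A) :
    frontier V = M := by
  rw [h.isOpen_outer.frontier_eq]
  refine Subset.antisymm (fun x ⟨hx, hxV⟩ => ?_) fun x hx => ⟨?_, fun hxV => ?_⟩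
  · have hxU : x ∉ U := disjoint_right.1 (h.disjoint.closure_right h.isOpen_inner) hx
    exact not_not.1 fun hxM => (h.union_eq.ge hxM).elim hxU hxV
  · rw [mem_closure_iff_nhds]
    intro N hN
    obtain ⟨y, ⟨hyN, hyAV⟩, hyA⟩ := mem_closure_iff_nhds.1 (frontier_compl A ▸ hMA hx).1 _
      (inter_mem hN (h.union_outer_mem_nhds x hx))
    exact ⟨y, hyN, hyAV.resolve_left hyA⟩
  · exact h.union_eq.le (.inr hxV) hx

theorem frontier_inner (h : FrontierSplitting A M U V) (hM : M ⊆ closure (interior A)) :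
    frontier U = M := by
  rw [h.isOpen_inner.frontier_eq]
  refine Subset.antisymm (fun x ⟨hx, hxU⟩ => ?_) fun x hx => ⟨?_, fun hxU => ?_⟩
  · have hxV : x ∉ V := disjoint_left.1 (h.disjoint.closure_left h.isOpen_outer) hx
    exact not_not.1 fun hxM => (h.union_eq.ge hxM).elim hxU hxV
  · exact closure_mono h.interior_subset_inner (hM hx)
  · exact h.union_eq.le (.inl hxU) hx

theorem interior_mem_nhdsWithin_inner (h : FrontierSplitting A M U V)
    (hM' : IsClosed (frontier A \ M)) {x : X} (hx : x ∈ M) : interior A ∈ 𝓝[U] x := by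
  have hxM' : x ∉ frontier A \ M := fun hx' => hx'.2 hx
  filter_upwards [self_mem_nhdsWithin, mem_nhdsWithin_of_mem_nhds (h.union_outer_mem_nhds x hx),
    mem_nhdsWithin_of_mem_nhds (hM'.isOpen_compl.mem_nhds hxM')] with y hyU hyAV hyM'
  have hyA : y ∈ A := hyAV.resolve_right (disjoint_left.1 h.disjoint hyU)
  have hyM : y ∉ M := h.union_eq.le (.inl hyU)
  exact not_not.1 fun hyi => hyM' ⟨⟨subset_closure hyA, hyi⟩, hyM⟩

theorem isSimplyConnected_closure_inner [SimplyConnectedSpace X] [LocallyPathConnectedSpace X]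
    (h : FrontierSplitting A M U V) (hMA : M ⊆ A) (hAi : A ⊆ closure (interior A))
    (hU : IsConnected U) (hA : IsSimplyConnected A) : IsSimplyConnected (closure U) := by
  have hAU : A ⊆ closure U := hAi.trans (closure_mono h.interior_subset_inner)
  have hclosure : closure U = U ∪ A := by
    refine Subset.antisymm ?_ (union_subset subset_closure hAU)
    rw [closure_eq_self_union_frontier, h.frontier_inner (hMA.trans hAi)]
    exact union_subset_union_right U hMA
  have hpath : IsPathConnected (closure U) := by
    obtain ⟨x, hx⟩ := closure_nonempty_iff.1 (hA.isPathConnected.nonempty.mono hAi)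
    rw [hclosure]
    exact (h.isOpen_inner.isConnected_iff_isPathConnected.1 hU).union hA.isPathConnected
      ⟨x, h.interior_subset_inner hx, interior_subset hx⟩
  refine isSimplyConnected_of_isOpen_union h.isOpen_inner (V := interior (A ∪ V)) isOpen_interior
    (eq_univ_of_forall fun x => ?_) subset_closure hAU (fun x ⟨hxU, hxAV⟩ => ?_) hA hpath
  · by_cases hxM : x ∈ M
    · exact .inr (mem_interior_iff_mem_nhds.2 (h.union_outer_mem_nhds x hxM))
    · exact (h.union_eq.ge hxM).imp_right fun hxV =>
        interior_maximal subset_union_right h.isOpen_outer hxV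
  · exact (interior_subset hxAV).resolve_right
      (disjoint_left.1 (h.disjoint.closure_left h.isOpen_outer) hxU)

end FrontierSplitting

end Splitting

section OuterSide

variable {E : Type*} [NormedAddCommGroup E] [InnerProductSpace ℝ E] {n : ℕ}
  {V : Set (sphere (0 : E) 1)}

-- If `q` were outside the component of `p`, a map without zeros would extend `ψ - ψ p` from
-- `frontier V`, since `Φ` makes `ψ - ψ p` homotopic to a constant there; here `ψ` is the
-- stereographic projection from `q`.
theorem mem_connectedComponentIn_of_homotopy (hE : Module.finrank ℝ E = n + 1) (hV : IsOpen V)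
    (hne : (frontier V).Nonempty) {p q : sphere (0 : E) 1} (hp : p ∈ V) (hq : q ∈ V)
    (Φ : C(frontier V × I, sphere (0 : E) 1)) (hΦ : ∀ z, Φ z ∉ V) (h0 : ∀ x, Φ (x, 0) = x)
    (h1 : ∀ x, dist p q < dist (Φ (x, 1)) q) :
    q ∈ connectedComponentIn V p := by
  by_contra hqp
  have : Fact (Module.finrank ℝ E = n + 1) := ⟨hE⟩
  have : FiniteDimensional ℝ E := .of_fact_finrank_eq_succ n
  have : ProperSpace E := FiniteDimensional.proper_real E
  have : LocallyPathConnectedSpace (sphere (0 : E) 1) := locallyPathConnectedSpace_sphere hE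
  have hpq : p ≠ q := fun h => hqp (h ▸ mem_connectedComponentIn hp)
  have hΦq : ∀ z, Φ z ≠ q := fun z h => hΦ z (h ▸ hq)
  have hΦp : ∀ z, Φ z ≠ p := fun z h => hΦ z (h ▸ hp)
  set a := stereographic' n q p
  set ψ : C(frontier V × I, EuclideanSpace ℝ (Fin n)) := ⟨fun z => stereographic' n q (Φ z),
    continuousOn_stereographic'.comp_continuous Φ.continuous hΦq⟩
  have hψa : ∀ z, ψ z - a ≠ 0 := fun z h =>
    hΦp z (injOn_stereographic' (hΦq z) hpq (sub_eq_zero.1 h))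
  have hψ1 : ∀ x, ‖ψ (x, 1)‖ < ‖a‖ := fun x => norm_stereographic'_lt hpq (h1 x)
  have ha : a ≠ 0 := norm_pos_iff.1 ((norm_nonneg _).trans_lt (hψ1 ⟨_, hne.some_mem⟩))
  have hcone : ∀ z : frontier V × I, (1 - z.2 : ℝ) • ψ (z.1, 1) - a ≠ 0 := fun ⟨x, t⟩ h => by
    refine (hψ1 x).not_ge ?_
    calc
      ‖a‖ = ‖(1 - t : ℝ) • ψ (x, 1)‖ := by rw [← sub_eq_zero.1 h]
      _ = (1 - t) * ‖ψ (x, 1)‖ := by rw [norm_smul, Real.norm_of_nonneg (sub_nonneg.2 t.2.2)]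
      _ ≤ ‖ψ (x, 1)‖ := mul_le_of_le_one_left (norm_nonneg _) (sub_le_self _ t.2.1)
  obtain ⟨g₁, hg₁, hg₁ψ⟩ := exists_continuousMap_avoiding_of_homotopy isClosed_frontier
    ⟨fun z => (1 - z.2 : ℝ) • ψ (z.1, 1) - a, by fun_prop⟩ hcone (.const _ (-a))
    (fun _ => neg_ne_zero.2 ha) (fun x => by simp)
  obtain ⟨g, hg, hgψ⟩ := exists_continuousMap_avoiding_of_homotopy isClosed_frontier
    ⟨fun z => ψ z - a, by fun_prop⟩ hψa g₁ hg₁ (fun x => by simp [hg₁ψ])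
  have hQ := frontier_connectedComponentIn_subset hV p
  have hqQ : q ∉ closure (connectedComponentIn V p) := fun h =>
    (hV.frontier_eq.subset (hQ (hV.connectedComponentIn.frontier_eq.superset ⟨h, hqp⟩))).2 hq
  obtain ⟨x, hx⟩ := exists_eq_zero_of_eqOn_frontier_stereographic'
    (mem_connectedComponentIn hp) hqQ g.continuous fun x hx => by
      rw [hgψ ⟨x, hQ hx⟩, ContinuousMap.coe_mk, ContinuousMap.coe_mk, h0]
  exact hg x hx

theorem exists_isPreconnected_mem_nhdsWithin_of_frontier_subset [NeZero n]
    [Fact (Module.finrank ℝ E = n + 1)]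
    {A : Set (sphere (0 : E) 1)} [ChartedSpace (EuclideanHalfSpace n) A] (hA : IsClosed A)
    (hV : IsOpen V) (hAV : Disjoint A V) (hfr : frontier V ⊆ frontier A) {x₀ : sphere (0 : E) 1}
    (hx₀ : x₀ ∈ frontier V) : ∃ S ⊆ V, IsPreconnected S ∧ S ∈ 𝓝[V] x₀ := by
  have : FiniteDimensional ℝ E := .of_fact_finrank_eq_succ n
  have : ProperSpace E := FiniteDimensional.proper_real E
  have hVA : frontier V ⊆ A := hfr.trans hA.frontier_subset
  obtain ⟨Φ, hΦ0, hΦ1⟩ :=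
    exists_homotopy_frontier_ne (n := n) (a₀ := ⟨x₀, hVA hx₀⟩) (hfr hx₀)
  set Ψ : C(frontier V × I, sphere (0 : E) 1) := ⟨fun z => Φ (⟨z.1, hVA z.1.2⟩, z.2), by fun_prop⟩
  have hΨ : ∀ z, Ψ z ∉ V := fun z => disjoint_left.1 hAV (Φ _).2
  have : CompactSpace (frontier V) := isCompact_iff_compactSpace.1 isClosed_frontier.isCompact
  set K : Set (sphere (0 : E) 1) := range fun x : frontier V => Ψ (x, 1)
  have hK : IsCompact K := isCompact_range (by fun_prop)
  have hx₀K : x₀ ∉ K := by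
    rintro ⟨x, hx⟩
    exact hΦ1 ⟨x, hVA x.2⟩ (hfr x.2) (Subtype.ext hx)
  obtain ⟨δ, hδ, hδK⟩ := Metric.isOpen_iff.1 hK.isClosed.isOpen_compl x₀ hx₀K
  have hfar : ∀ x, δ ≤ dist (Ψ (x, 1)) x₀ := fun x => not_lt.1 fun h => hδK h ⟨x, rfl⟩
  have hball : ball x₀ (δ / 3) ∈ 𝓝 x₀ := ball_mem_nhds x₀ (by positivity)
  obtain ⟨p, hp, hpV⟩ := mem_closure_iff_nhds.1 (frontier_subset_closure hx₀) _ hball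
  refine ⟨connectedComponentIn V p, connectedComponentIn_subset V p,
    isPreconnected_connectedComponentIn, ?_⟩
  filter_upwards [self_mem_nhdsWithin, mem_nhdsWithin_of_mem_nhds hball] with q hqV hq
  refine mem_connectedComponentIn_of_homotopy (n := n) Fact.out hV ⟨x₀, hx₀⟩ hpV hqV Ψ hΨ
    (fun x => ?_) fun x => ?_
  · exact congrArg Subtype.val (hΦ0 _)
  · have hpq := dist_triangle_right p q x₀
    have hxq := dist_triangle (Ψ (x, 1)) q x₀
    rw [mem_ball] at hp hq
    linarith [hfar x]

end OuterSide

section Main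

variable {E : Type*} [NormedAddCommGroup E] [InnerProductSpace ℝ E] {n : ℕ} [NeZero n]
  [Fact (Module.finrank ℝ E = n + 1)]

theorem exists_frontierSplitting_isConnected (hn : 2 ≤ n) {A : Set (sphere (0 : E) 1)}
    [ChartedSpace (EuclideanHalfSpace n) A] (hA : IsClosed A) (hAc : IsPreconnected A)
    {x₀ : sphere (0 : E) 1} (hx₀ : x₀ ∈ frontier A) :
    ∃ U V, FrontierSplitting A (connectedComponentIn (frontier A) x₀) U V ∧
      IsConnected U ∧ IsConnected V := by
  have hE : Module.finrank ℝ E = n + 1 := Fact.out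
  have : SimplyConnectedSpace (sphere (0 : E) 1) := simplyConnectedSpace_sphere hE hn
  have : LocallyPathConnectedSpace (sphere (0 : E) 1) := locallyPathConnectedSpace_sphere hE
  set M := connectedComponentIn (frontier A) x₀
  have hMA : M ⊆ frontier A := connectedComponentIn_subset _ _
  have hMc : IsPreconnected M := isPreconnected_connectedComponentIn
  have hx₀M : x₀ ∈ M := mem_connectedComponentIn hx₀
  have hM' : IsClosed (frontier A \ M) := isClosed_diff_connectedComponentIn isClosed_frontier
    (fun x hx => connectedComponentIn_frontier_mem_nhdsWithin (n := n) hA hx) x₀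
  obtain ⟨U, V, h⟩ := exists_frontierSplitting hA hAc ⟨x₀, hA.frontier_subset hx₀⟩
    (isClosed_connectedComponentIn isClosed_frontier x₀) hMA hM'
  have hAi : A ⊆ closure (interior A) := subset_closure_interior (n := n)
  have hU : frontier U = M := h.frontier_inner (hMA.trans (hA.frontier_subset.trans hAi))
  have hV : frontier V = M := h.frontier_outer hMA
  have hne : ∀ {W}, frontier W = M → W.Nonempty := fun hW =>
    closure_nonempty_iff.1 ⟨x₀, frontier_subset_closure (hW ▸ hx₀M)⟩
  refine ⟨U, V, h, ⟨hne hU, ?_⟩, hne hV, ?_⟩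
  · refine isPreconnected_of_isPreconnected_frontier h.isOpen_inner (hU ▸ hMc) ⟨x₀, hU ▸ hx₀M⟩
      fun x hx => ?_
    have hxM : x ∈ M := hU ▸ hx
    obtain ⟨S, hSA, hS, hSx⟩ := exists_isPreconnected_mem_nhdsWithin_interior (n := n)
      (hA.frontier_subset (hMA hxM))
    exact ⟨S, hSA.trans h.interior_subset_inner, hS,
      nhdsWithin_le_of_mem (h.interior_mem_nhdsWithin_inner hM' hxM) hSx⟩
  · exact isPreconnected_of_isPreconnected_frontier h.isOpen_outer (hV ▸ hMc) ⟨x₀, hV ▸ hx₀M⟩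
      fun x hx => exists_isPreconnected_mem_nhdsWithin_of_frontier_subset (n := n) hA
        h.isOpen_outer (h.disjoint_outer hAi) (hV ▸ hMA) hx

end Main

end SphereBoundary

open SphereBoundary in
theorem stmt10_general {E : Type*} [NormedAddCommGroup E] [InnerProductSpace ℝ E] {n : ℕ}
    [NeZero n] [Fact (Module.finrank ℝ E = n + 1)] (hn : 2 ≤ n) (A : Set (Metric.sphere (0 : E) 1))
    (hA : IsClosed A) (hconn : IsPreconnected A) [ChartedSpace (EuclideanHalfSpace n) A]
    (M : Set (Metric.sphere (0 : E) 1))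
    (hM : ∃ x ∈ frontier A, M = connectedComponentIn (frontier A) x) :
    Nat.card (ConnectedComponents (Mᶜ : Set (Metric.sphere (0 : E) 1))) = 2 ∧
    (SimplyConnectedSpace A → ∀ x ∈ interior A,
      SimplyConnectedSpace (closure (connectedComponentIn Mᶜ x))) := by
  obtain ⟨x₀, hx₀, rfl⟩ := hM
  have hE : Module.finrank ℝ E = n + 1 := Fact.out
  have : SimplyConnectedSpace (Metric.sphere (0 : E) 1) := simplyConnectedSpace_sphere hE hn
  have : LocallyPathConnectedSpace (Metric.sphere (0 : E) 1) := locallyPathConnectedSpace_sphere hE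
  obtain ⟨U, V, h, hU, hV⟩ := exists_frontierSplitting_isConnected hn hA hconn hx₀
  rw [← h.union_eq]
  refine ⟨card_connectedComponents_union_eq_two h.isOpen_inner h.isOpen_outer h.disjoint hU hV,
    fun hsc x hx => ?_⟩
  rw [connectedComponentIn_union_eq_left h.isOpen_inner h.isOpen_outer h.disjoint
    hU.isPreconnected (h.interior_subset_inner hx)]
  exact h.isSimplyConnected_closure_inner
    ((connectedComponentIn_subset _ _).trans hA.frontier_subset)
    (subset_closure_interior (n := n)) hU hsc

/-- If `A ⊆ S⁴` is a compact connected simply connected smooth 4-submanifold with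
boundary and `M` is a connected component of `∂A`, then `S⁴ \ M` has exactly two
connected components, and the closure of the component containing the interior of `A`
is simply connected. -/
theorem stmt10 (A : Set Sph4) (hcpt : IsCompact A) (hconn : IsConnected A)
    (hsc : SimplyConnectedSpace A)
    (hman : ChartedSpace (EuclideanHalfSpace 4) A)
    (M : Set Sph4) (hM : ∃ x ∈ frontier A, M = connectedComponentIn (frontier A) x) :
    Nat.card (ConnectedComponents (Mᶜ : Set Sph4)) = 2 ∧
    ∀ x ∈ interior A, x ∉ M →
      SimplyConnectedSpace (closure (connectedComponentIn Mᶜ x)) := by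
  have : Fact (Module.finrank ℝ (EuclideanSpace ℝ (Fin 5)) = 4 + 1) := ⟨finrank_euclideanSpace_fin⟩
  obtain ⟨hcard, hclosure⟩ :=
    stmt10_general (n := 4) (by norm_num) A hcpt.isClosed hconn.isPreconnected M hM
  exact ⟨hcard, fun x hx _ => hclosure hsc x hx⟩
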